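/- arXiv:2402.16120 — 2 statements merged into one kernel-verified Lean document; each statement's English description precedes it below -/
import Mathlib

section
/- For n = 1, the function Ψ_γ(x) = ∫_R dγ' c^{2γ'/(ic)} e^{−γ' x/(ic)} Γ((γ+γ')/(ic) + 1/2) Γ((−γ+γ')/(ic) + 1/2), where the integral is over real γ' and c > 0, satisfies the one-particle B_1 Toda (Bessel-type) equation (−d²/dx² + d/dx + (1/c²)e^{x}) Ψ_γ(x) = (γ²/c² + 1/4) Ψ_γ(x). -/
open MeasureTheory

/-!
In the variables `s = γ' / (ic)` and `ν = γ / (ic)`, the wave function is up to a constant the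
inverse Mellin transform, at `eˣ`, of `g(s) = c ^ (2s) Γ(ν + s + 1/2) Γ(-ν + s + 1/2)`.
Differentiating in `x` multiplies `g` by `-s`, and multiplying by `eˣ` replaces `g(s)` by `g(s + 1)`
once the contour has been moved one unit to the right, which the decay of `Γ` and the absence of
poles allow. The relation `g(s + 1) = c² ((s + 1/2)² - ν²) g(s)`, a consequence of
`Γ(z + 1) = z Γ(z)`, thereby becomes the differential equation.
-/

section

open Set Filter Topology Complex Bornology
open scoped Real FourierTransform Interval

variable {E : Type*} [NormedAddCommGroup E] {f : ℂ → E} {a b σ : ℝ}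

/-- `f` decays on `S` faster than every power of the variable, uniformly in `S`: the condition under
which the contour of an inverse Mellin transform can be moved within a vertical strip `S`. -/
def RapidlyDecayingOn (f : ℂ → E) (S : Set ℂ) : Prop :=
  ∀ n : ℕ, ∃ C, ∀ s ∈ S, ‖s‖ ^ n * ‖f s‖ ≤ C

namespace RapidlyDecayingOn

variable {S : Set ℂ}

lemma exists_norm_le (h : RapidlyDecayingOn f S) : ∃ C, ∀ s ∈ S, ‖f s‖ ≤ C := by
  simpa using h 0

lemma verticalIntegrable (h : RapidlyDecayingOn f S) (hf : ContinuousOn f S)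
    (hσ : ∀ y : ℝ, (σ + y * I : ℂ) ∈ S) : VerticalIntegrable f σ := by
  obtain ⟨C, hC⟩ := h.exists_norm_le
  obtain ⟨D, hD⟩ := h (0 + (volume : Measure ℝ).integrablePower)
  have h_meas : AEStronglyMeasurable (fun y : ℝ ↦ f (σ + y * I)) :=
    (hf.comp_continuous (by fun_prop) hσ).aestronglyMeasurable
  have h_bound (y : ℝ) :
      ‖y‖ ^ (0 + (volume : Measure ℝ).integrablePower) * ‖f (σ + y * I)‖ ≤ D := by
    refine le_trans ?_ (hD _ (hσ y))
    gcongr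
    simpa using abs_im_le_norm (σ + y * I)
  rw [VerticalIntegrable, ← integrable_norm_iff h_meas]
  simpa using integrable_of_le_of_pow_mul_le (fun y ↦ hC _ (hσ y)) h_bound h_meas

lemma tendstoUniformlyOn {T : Set ℝ} (h : RapidlyDecayingOn f (re ⁻¹' T)) :
    TendstoUniformlyOn (fun (y x : ℝ) ↦ f (x + y * I)) 0 (cobounded ℝ) T := by
  obtain ⟨C, hC⟩ := h 1
  rw [Metric.tendstoUniformlyOn_iff]
  intro ε hε
  filter_upwards [tendsto_norm_cobounded_atTop.eventually_gt_atTop (max 0 (C / ε))] with y hy x hx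
  rw [max_lt_iff, div_lt_iff₀' hε] at hy
  have h_im : ‖y‖ ≤ ‖(x + y * I : ℂ)‖ := by simpa using abs_im_le_norm (x + y * I)
  have h_bound : ‖y‖ * ‖f (x + y * I)‖ ≤ C := by
    refine le_trans ?_ (hC (x + y * I) (by simpa using hx))
    rw [pow_one]
    gcongr
  simpa using lt_of_mul_lt_mul_left ((h_bound.trans_lt hy.2).trans_eq (mul_comm _ _)) hy.1.le

variable [NormedSpace ℂ E]

lemma bounded_smul {g : ℂ → ℂ} (hf : RapidlyDecayingOn f S) (hg : ∃ C, ∀ s ∈ S, ‖g s‖ ≤ C) :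
    RapidlyDecayingOn (fun s ↦ g s • f s) S := by
  intro n
  obtain ⟨C, hC⟩ := hf n
  obtain ⟨D, hD⟩ := hg
  refine ⟨D * C, fun s hs ↦ ?_⟩
  have hD0 : 0 ≤ D := (norm_nonneg _).trans (hD s hs)
  calc ‖s‖ ^ n * ‖g s • f s‖ = ‖g s‖ * (‖s‖ ^ n * ‖f s‖) := by rw [norm_smul]; ring
    _ ≤ D * C := by gcongr; exacts [hD s hs, hC s hs]

lemma id_smul (hf : RapidlyDecayingOn f S) : RapidlyDecayingOn (fun s ↦ s • f s) S := by
  intro n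
  simpa only [norm_smul, pow_succ, mul_assoc] using hf (n + 1)

end RapidlyDecayingOn

variable [NormedSpace ℂ E]

section MellinInv

variable {x : ℝ}

lemma verticalIntegrable_cpow_neg_smul (hx : 0 < x) (hf : VerticalIntegrable f σ) :
    VerticalIntegrable (fun s ↦ (x : ℂ) ^ (-s) • f s) σ := by
  have hx' : (x : ℂ) ≠ 0 := ofReal_ne_zero.mpr hx.ne'
  refine hf.bdd_smul (x ^ (-σ)) ?_ (Eventually.of_forall fun y ↦ ?_)
  · exact (Continuous.const_cpow (by fun_prop) (Or.inl hx')).aestronglyMeasurable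
  · simp [norm_cpow_eq_rpow_re_of_pos hx]

lemma mellinInv_add {g : ℂ → E} (hx : 0 < x) (hf : VerticalIntegrable f σ)
    (hg : VerticalIntegrable g σ) :
    mellinInv σ (f + g) x = mellinInv σ f x + mellinInv σ g x := by
  simp only [mellinInv, Pi.add_apply, smul_add]
  rw [integral_add (verticalIntegrable_cpow_neg_smul hx hf)
    (verticalIntegrable_cpow_neg_smul hx hg), smul_add]

lemma mellinInv_const_smul (σ : ℝ) (f : ℂ → E) (k : ℂ) (x : ℝ) :
    mellinInv σ (k • f) x = k • mellinInv σ f x := by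
  simp only [mellinInv, Pi.smul_apply, smul_comm _ k, integral_smul]

lemma mellinInv_add_const (σ a : ℝ) (f : ℂ → E) (hx : 0 < x) :
    mellinInv (σ + a) f x = (x : ℂ) ^ (-a : ℂ) • mellinInv σ (fun s ↦ f (s + a)) x := by
  have hx' : (x : ℂ) ≠ 0 := ofReal_ne_zero.mpr hx.ne'
  rw [mellinInv, mellinInv, smul_comm ((x : ℂ) ^ (-a : ℂ)), ← integral_smul ((x : ℂ) ^ (-a : ℂ))]
  congr! 3 with y
  rw [smul_smul, ← cpow_add _ _ hx']
  push_cast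
  ring_nf

lemma mellinInv_exp_eq_fourier (σ : ℝ) (f : ℂ → E) (u : ℝ) :
    mellinInv σ f (Real.exp u) =
      cexp (-σ * u) • 𝓕 (fun y : ℝ ↦ f (σ + 2 * π * y * I)) u := by
  rw [mellinInv_eq_fourierInv σ f (Real.exp_pos u), Real.log_exp, Real.fourierInv_eq_fourier_neg,
    neg_neg, cpow_def_of_ne_zero (mod_cast (Real.exp_pos u).ne'), ← ofReal_log (Real.exp_pos u).le,
    Real.log_exp, mul_comm]

lemma hasDerivAt_mellinInv_exp (hf : VerticalIntegrable f σ)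
    (hsf : VerticalIntegrable (fun s ↦ s • f s) σ) (u : ℝ) :
    HasDerivAt (fun v : ℝ ↦ mellinInv σ f (Real.exp v))
      (-mellinInv σ (fun s ↦ s • f s) (Real.exp u)) u := by
  set g : ℂ → E := (fun s ↦ s • f s) - (σ : ℂ) • f
  set F : ℝ → E := fun y ↦ f (σ + 2 * π * y * I)
  have hσf : VerticalIntegrable ((σ : ℂ) • f) σ := hf.smul (σ : ℂ)
  have hg : VerticalIntegrable g σ := hsf.sub hσf
  have hg_line (y : ℝ) : g (σ + 2 * π * y * I) = -((-2 * π * I * y : ℂ) • F y) := by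
    simp only [g, F, Pi.sub_apply, Pi.smul_apply, ← sub_smul, ← neg_smul]
    ring_nf
  have h_two_pi : 2 * π ≠ 0 := by positivity
  have hF : Integrable F := by simpa [F] using hf.comp_mul_left' h_two_pi
  have hyF : Integrable (fun y : ℝ ↦ y • F y) := by
    have h_scaled : Integrable fun y : ℝ ↦ g (σ + 2 * π * y * I) := by
      simpa using hg.comp_mul_left' h_two_pi
    refine (h_scaled.smul (2 * π * I : ℂ)⁻¹).congr (Eventually.of_forall fun y ↦ ?_)
    simp only [Pi.smul_apply, hg_line, ← neg_smul, smul_smul, ← coe_smul]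
    congr 1
    field_simp
  have h_fourier : cexp (-σ * u) • 𝓕 (fun y : ℝ ↦ (-2 * π * I * y) • F y) u =
      -mellinInv σ g (Real.exp u) := by
    simp only [mellinInv_exp_eq_fourier, hg_line, Real.fourier_real_eq, smul_neg, integral_neg,
      neg_neg]
  have h_split : mellinInv σ (fun s ↦ s • f s) (Real.exp u) =
      mellinInv σ g (Real.exp u) + (σ : ℂ) • mellinInv σ f (Real.exp u) := by
    rw [← mellinInv_const_smul, ← mellinInv_add (Real.exp_pos u) hg hσf, sub_add_cancel]
  have h_exp : HasDerivAt (fun v : ℝ ↦ cexp (-σ * v)) (cexp (-σ * u) * -σ) u := by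
    simpa using (ofRealCLM.hasDerivAt (x := u)).const_mul (-σ : ℂ) |>.cexp
  have h_prod := h_exp.smul (Real.hasDerivAt_fourier hF hyF u)
  rw [h_fourier] at h_prod
  simp only [h_split, mellinInv_exp_eq_fourier σ f]
  exact h_prod.congr_deriv (by module)

end MellinInv

lemma integral_vertical_eq_of_tendstoUniformlyOn [CompleteSpace E] (hab : a ≤ b)
    (hf : DifferentiableOn ℂ f (re ⁻¹' Icc a b))
    (ha : VerticalIntegrable f a) (hb : VerticalIntegrable f b)
    (hzero : TendstoUniformlyOn (fun (y x : ℝ) ↦ f (x + y * I)) 0 (cobounded ℝ) (Icc a b)) :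
    ∫ y : ℝ, f (a + y * I) = ∫ y : ℝ, f (b + y * I) := by
  rw [← uIcc_of_le hab] at hf hzero
  have h_cobounded : cobounded ℝ = atBot ⊔ atTop := IsOrderBornology.cobounded_eq
  have h_horizontal : Tendsto (fun y : ℝ ↦ ∫ x in a..b, f (x + y * I)) (cobounded ℝ) (𝓝 0) := by
    have hcont (y : ℝ) : ContinuousOn (fun x : ℝ ↦ f (x + y * I)) [[a, b]] :=
      hf.continuousOn.comp (by fun_prop) fun x hx ↦ by simpa using hx
    rw [h_cobounded] at hzero ⊢
    simpa using hzero.tendsto_intervalIntegral_of_continuousOn (μ := volume)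
      (Eventually.of_forall hcont)
  rw [h_cobounded, tendsto_sup] at h_horizontal
  have h_bot := h_horizontal.1.comp tendsto_neg_atTop_atBot
  have h_top := h_horizontal.2
  have h_left := intervalIntegral_tendsto_integral ha tendsto_neg_atTop_atBot tendsto_id
  have h_right := intervalIntegral_tendsto_integral hb tendsto_neg_atTop_atBot tendsto_id
  have h_rect (T : ℝ) := integral_boundary_rect_eq_zero_of_differentiableOn f ⟨a, -T⟩ ⟨b, T⟩
    (hf.mono fun z hz ↦ hz.1)
  have h_lim := ((h_bot.sub h_top).add (h_right.const_smul I)).sub (h_left.const_smul I)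
  have h_eq := tendsto_nhds_unique (h_lim.congr h_rect) tendsto_const_nhds
  rw [sub_self, zero_add, ← smul_sub, smul_eq_zero_iff_right I_ne_zero, sub_eq_zero] at h_eq
  exact h_eq.symm

lemma exists_norm_cpow_mul_le {c : ℝ} (hc : 0 < c) (r a b : ℝ) :
    ∃ C, ∀ s ∈ re ⁻¹' Icc a b, ‖(c : ℂ) ^ (r * s)‖ ≤ C := by
  have hcont : Continuous fun t : ℝ ↦ c ^ (r * t) :=
    Continuous.rpow continuous_const (by fun_prop) fun _ ↦ Or.inl hc.ne'
  obtain ⟨C, hC⟩ := isCompact_Icc.exists_bound_of_continuousOn (s := Icc a b) hcont.continuousOn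
  refine ⟨C, fun s hs ↦ (le_abs_self _).trans ?_⟩
  simpa [norm_cpow_eq_rpow_re_of_pos hc] using hC s.re hs

section Strip

variable [CompleteSpace E]

lemma RapidlyDecayingOn.mellinInv_eq (hab : a ≤ b)
    (hf : DifferentiableOn ℂ f (re ⁻¹' Icc a b)) (h : RapidlyDecayingOn f (re ⁻¹' Icc a b))
    {x : ℝ} (hx : 0 < x) : mellinInv a f x = mellinInv b f x := by
  have hx' : (x : ℂ) ≠ 0 := ofReal_ne_zero.mpr hx.ne'
  have h_decay : RapidlyDecayingOn (fun s ↦ (x : ℂ) ^ (-s) • f s) (re ⁻¹' Icc a b) :=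
    h.bounded_smul <| by simpa using exists_norm_cpow_mul_le hx (-1) a b
  have h_diff : DifferentiableOn ℂ (fun s ↦ (x : ℂ) ^ (-s) • f s) (re ⁻¹' Icc a b) :=
    (Differentiable.const_cpow (by fun_prop) (Or.inl hx')).differentiableOn.smul hf
  rw [mellinInv, mellinInv, integral_vertical_eq_of_tendstoUniformlyOn hab h_diff
    (h_decay.verticalIntegrable h_diff.continuousOn (by simpa using hab))
    (h_decay.verticalIntegrable h_diff.continuousOn (by simpa using hab))
    h_decay.tendstoUniformlyOn]

lemma RapidlyDecayingOn.exp_smul_mellinInv_exp (h : RapidlyDecayingOn f (re ⁻¹' Icc σ (σ + 1)))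
    (hf : DifferentiableOn ℂ f (re ⁻¹' Icc σ (σ + 1))) (u : ℝ) :
    cexp u • mellinInv σ f (Real.exp u) = mellinInv σ (fun s ↦ f (s + 1)) (Real.exp u) := by
  have hu := Real.exp_pos u
  rw [h.mellinInv_eq (by simp) hf hu, mellinInv_add_const σ 1 f hu, smul_smul, ofReal_one,
    cpow_neg_one, ofReal_exp, mul_inv_cancel₀ (exp_ne_zero _), one_smul]

lemma exp_smul_mellinInv_exp_eq_of_shift {p q r : ℂ}
    (hf : DifferentiableOn ℂ f (re ⁻¹' Icc σ (σ + 1)))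
    (h_decay : RapidlyDecayingOn f (re ⁻¹' Icc σ (σ + 1)))
    (h_shift : ∀ s : ℂ, s.re = σ → f (s + 1) = (p * s ^ 2 + q * s + r) • f s)
    {W : ℝ → E} (hW : ∀ u, W u = mellinInv σ f (Real.exp u)) (u : ℝ) :
    cexp u • W u = p • deriv (deriv W) u - q • deriv W u + r • W u := by
  obtain rfl : W = fun u ↦ mellinInv σ f (Real.exp u) := funext hW
  have h_line (y : ℝ) : (σ + y * I : ℂ) ∈ re ⁻¹' Icc σ (σ + 1) := by simp
  set f₁ : ℂ → E := fun s ↦ s • f s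
  set f₂ : ℂ → E := fun s ↦ s • f₁ s
  have hf₁ : DifferentiableOn ℂ f₁ (re ⁻¹' Icc σ (σ + 1)) := differentiableOn_id.smul hf
  have hf₂ : DifferentiableOn ℂ f₂ (re ⁻¹' Icc σ (σ + 1)) := differentiableOn_id.smul hf₁
  have h₀ : VerticalIntegrable f σ := h_decay.verticalIntegrable hf.continuousOn h_line
  have h₁ : VerticalIntegrable f₁ σ := h_decay.id_smul.verticalIntegrable hf₁.continuousOn h_line
  have h₂ : VerticalIntegrable f₂ σ :=
    h_decay.id_smul.id_smul.verticalIntegrable hf₂.continuousOn h_line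
  have h_deriv : deriv (fun u ↦ mellinInv σ f (Real.exp u)) =
      fun u ↦ -mellinInv σ f₁ (Real.exp u) :=
    funext fun u ↦ (hasDerivAt_mellinInv_exp h₀ h₁ u).deriv
  have h_deriv₂ : deriv (fun u ↦ -mellinInv σ f₁ (Real.exp u)) u = mellinInv σ f₂ (Real.exp u) := by
    simpa using (hasDerivAt_mellinInv_exp h₁ h₂ u).neg.deriv
  have h_line_eq : mellinInv σ (fun s ↦ f (s + 1)) (Real.exp u) =
      mellinInv σ (p • f₂ + q • f₁ + r • f) (Real.exp u) := by
    rw [mellinInv, mellinInv]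
    congr! 4 with y
    rw [h_shift _ (by simp)]
    simp only [f₁, f₂, Pi.add_apply, Pi.smul_apply]
    module
  have hp : VerticalIntegrable (p • f₂) σ := h₂.smul p
  have hq : VerticalIntegrable (q • f₁) σ := h₁.smul q
  have hr : VerticalIntegrable (r • f) σ := h₀.smul r
  have hpq : VerticalIntegrable (p • f₂ + q • f₁) σ := hp.add hq
  have hu := Real.exp_pos u
  rw [h_deriv, h_deriv₂, h_decay.exp_smul_mellinInv_exp hf, h_line_eq,
    mellinInv_add hu hpq hr, mellinInv_add hu hp hq]
  simp only [mellinInv_const_smul]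
  module

end Strip

section GammaDecay

lemma norm_Gamma_le_Gamma_re {s : ℂ} (hs : 0 < s.re) : ‖Gamma s‖ ≤ Real.Gamma s.re := by
  rw [Gamma_eq_integral hs, Real.Gamma_eq_integral hs, GammaIntegral]
  refine (norm_integral_le_integral_norm _).trans_eq <|
    setIntegral_congr_fun measurableSet_Ioi fun x hx ↦ ?_
  simp [norm_cpow_eq_rpow_re_of_pos hx, Complex.norm_exp]

lemma norm_pow_mul_norm_Gamma_le {s : ℂ} (hs : 0 < s.re) (n : ℕ) :
    ‖s‖ ^ n * ‖Gamma s‖ ≤ Real.Gamma (s.re + n) := by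
  induction n generalizing s with
  | zero => simpa using norm_Gamma_le_Gamma_re hs
  | succ n ih =>
    have h_norm : ‖s‖ ≤ ‖s + 1‖ := by
      rw [Complex.norm_def, Complex.norm_def]
      gcongr
      simp only [normSq_apply, add_re, add_im, one_re, one_im]
      nlinarith
    have hs0 : s ≠ 0 := by rintro rfl; simp at hs
    calc ‖s‖ ^ (n + 1) * ‖Gamma s‖ = ‖s‖ ^ n * ‖Gamma (s + 1)‖ := by
          rw [Gamma_add_one s hs0, norm_mul, pow_succ, mul_assoc]
      _ ≤ ‖s + 1‖ ^ n * ‖Gamma (s + 1)‖ := by gcongr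
      _ ≤ Real.Gamma ((s + 1).re + n) := ih (by simp only [add_re, one_re]; linarith)
      _ = Real.Gamma (s.re + (n + 1 : ℕ)) := by rw [add_re, one_re]; push_cast; ring_nf

lemma rapidlyDecayingOn_Gamma_add {μ : ℂ} {a : ℝ} (b : ℝ) (ha : 0 < μ.re + a) :
    RapidlyDecayingOn (fun s ↦ Gamma (μ + s)) (re ⁻¹' Icc a b) := by
  intro n
  set m := μ.re + a
  have hcont : ContinuousOn (fun t : ℝ ↦ Real.Gamma (t + n)) (Icc m (μ.re + b)) :=
    Real.differentiableOn_Gamma_Ioi.continuousOn.comp (by fun_prop) fun t ht ↦ by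
      simp only [mem_Ioi]; linarith [ht.1, n.cast_nonneg (α := ℝ)]
  obtain ⟨C, hC⟩ := isCompact_Icc.exists_bound_of_continuousOn hcont
  refine ⟨(1 + ‖μ‖ / m) ^ n * C, fun s hs ↦ ?_⟩
  set w := μ + s with hw
  have hw_mem : w.re ∈ Icc m (μ.re + b) := by simpa [w, m] using hs
  have h_norm : ‖s‖ ≤ (1 + ‖μ‖ / m) * ‖w‖ := by
    have hmw : m ≤ ‖w‖ := hw_mem.1.trans (re_le_norm w)
    calc ‖s‖ = ‖w - μ‖ := by rw [hw, add_sub_cancel_left]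
      _ ≤ ‖w‖ + ‖μ‖ / m * m := by rw [div_mul_cancel₀ _ ha.ne']; exact norm_sub_le w μ
      _ ≤ ‖w‖ + ‖μ‖ / m * ‖w‖ := by gcongr
      _ = (1 + ‖μ‖ / m) * ‖w‖ := by ring
  calc ‖s‖ ^ n * ‖Gamma w‖ ≤ ((1 + ‖μ‖ / m) * ‖w‖) ^ n * ‖Gamma w‖ := by gcongr
    _ = (1 + ‖μ‖ / m) ^ n * (‖w‖ ^ n * ‖Gamma w‖) := by rw [mul_pow, mul_assoc]
    _ ≤ (1 + ‖μ‖ / m) ^ n * C := by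
        gcongr
        exact (norm_pow_mul_norm_Gamma_le (ha.trans_le hw_mem.1) n).trans <|
          (le_abs_self _).trans (hC _ hw_mem)

lemma differentiableOn_Gamma_add {μ : ℂ} {a : ℝ} (b : ℝ) (ha : 0 < μ.re + a) :
    DifferentiableOn ℂ (fun s ↦ Gamma (μ + s)) (re ⁻¹' Icc a b) := by
  intro s hs
  refine DifferentiableAt.differentiableWithinAt ?_
  refine (differentiableAt_Gamma (μ + s) fun m h ↦ ?_).comp s (f := fun s ↦ μ + s) (by fun_prop)
  have h_re : μ.re + s.re = -m := by simpa using congrArg re h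
  linarith [hs.1, m.cast_nonneg (α := ℝ)]

end GammaDecay

section B1Toda

variable {c : ℝ} {ν : ℂ}

/-- The Mellin–Barnes density of the `B₁` Toda wave function, in the variables `s = γ' / (ic)` and
`ν = γ / (ic)`. -/
noncomputable def b1TodaDensity (c : ℝ) (ν s : ℂ) : ℂ :=
  (c : ℂ) ^ (2 * s) * Gamma (ν + 1 / 2 + s) * Gamma (-ν + 1 / 2 + s)

lemma b1TodaDensity_add_one (hc : c ≠ 0) {s : ℂ} (h₁ : ν + 1 / 2 + s ≠ 0)
    (h₂ : -ν + 1 / 2 + s ≠ 0) :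
    b1TodaDensity c ν (s + 1) = c ^ 2 * ((s + 1 / 2) ^ 2 - ν ^ 2) * b1TodaDensity c ν s := by
  have h_cpow : (c : ℂ) ^ (2 * (s + 1)) = c ^ 2 * (c : ℂ) ^ (2 * s) := by
    rw [mul_add_one, cpow_add _ _ (ofReal_ne_zero.mpr hc), cpow_ofNat, mul_comm]
  rw [b1TodaDensity, b1TodaDensity, h_cpow, ← add_assoc, ← add_assoc, Gamma_add_one _ h₁,
    Gamma_add_one _ h₂]
  ring

lemma differentiableOn_b1TodaDensity (hc : c ≠ 0) {a : ℝ} (b : ℝ) (hν : |ν.re| < 1 / 2 + a) :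
    DifferentiableOn ℂ (b1TodaDensity c ν) (re ⁻¹' Icc a b) := by
  obtain ⟨hν₁, hν₂⟩ := abs_lt.mp hν
  have h_cpow : Differentiable ℂ fun s : ℂ ↦ (c : ℂ) ^ (2 * s) :=
    Differentiable.const_cpow (by fun_prop) (Or.inl (ofReal_ne_zero.mpr hc))
  refine (h_cpow.differentiableOn.mul (differentiableOn_Gamma_add b ?_)).mul
    (differentiableOn_Gamma_add b ?_) <;> norm_num <;> linarith

lemma rapidlyDecayingOn_b1TodaDensity (hc : 0 < c) {a : ℝ} (b : ℝ) (hν : |ν.re| < 1 / 2 + a) :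
    RapidlyDecayingOn (b1TodaDensity c ν) (re ⁻¹' Icc a b) := by
  obtain ⟨hν₁, hν₂⟩ := abs_lt.mp hν
  have h_Gamma₁ : RapidlyDecayingOn (fun s ↦ Gamma (ν + 1 / 2 + s)) (re ⁻¹' Icc a b) :=
    rapidlyDecayingOn_Gamma_add b (by norm_num; linarith)
  have h_Gamma₂ : RapidlyDecayingOn (fun s ↦ Gamma (-ν + 1 / 2 + s)) (re ⁻¹' Icc a b) :=
    rapidlyDecayingOn_Gamma_add b (by norm_num; linarith)
  have h_cpow := exists_norm_cpow_mul_le hc 2 a b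
  intro n
  simpa [b1TodaDensity, mul_assoc] using
    (h_Gamma₂.bounded_smul h_Gamma₁.exists_norm_le).bounded_smul h_cpow n

lemma integral_b1Toda_eq_mellinInv (hc : 0 < c) (γ : ℂ) (x : ℝ) :
    ∫ t : ℝ, (c : ℂ) ^ ((2 * (t : ℂ)) / (I * c)) * cexp (-(t : ℂ) * (x : ℂ) / (I * c)) *
        Gamma ((γ + (t : ℂ)) / (I * c) + 1 / 2) * Gamma ((-γ + (t : ℂ)) / (I * c) + 1 / 2) =
      (2 * π * c : ℂ) * mellinInv 0 (b1TodaDensity c (γ / (I * c))) (Real.exp x) := by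
  have hx : (Real.exp x : ℂ) ≠ 0 := mod_cast (Real.exp_pos x).ne'
  set F : ℝ → ℂ := fun y ↦
    (Real.exp x : ℂ) ^ (-(y * I)) * b1TodaDensity c (γ / (I * c)) (y * I)
  have h_substitution (t : ℝ) :
      (c : ℂ) ^ ((2 * (t : ℂ)) / (I * c)) * cexp (-(t : ℂ) * (x : ℂ) / (I * c)) *
        Gamma ((γ + (t : ℂ)) / (I * c) + 1 / 2) * Gamma ((-γ + (t : ℂ)) / (I * c) + 1 / 2) =
      F (t / -c) := by
    have h_variable : ((t / -c : ℝ) : ℂ) * I = t / (I * c) := by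
      push_cast
      rw [div_mul_eq_div_div, div_I]
      ring
    have h_exp : (Real.exp x : ℂ) ^ (-(t / (I * c))) = cexp (-(t : ℂ) * x / (I * c)) := by
      rw [cpow_def_of_ne_zero hx, ← ofReal_log (Real.exp_pos x).le, Real.log_exp]
      ring_nf
    simp only [F, b1TodaDensity, h_variable, h_exp]
    ring_nf
  simp only [h_substitution]
  rw [Measure.integral_comp_div F, mellinInv, abs_neg, abs_of_pos hc]
  simp only [F, ofReal_zero, zero_add, smul_eq_mul, real_smul]
  push_cast
  field_simp
  simp only [mul_comm I]

lemma b1_toda_mellinInv {σ : ℝ} (hc : 0 < c) (hν : |ν.re| < 1 / 2 + σ) {W : ℝ → ℂ}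
    (hW : ∀ u, W u = mellinInv σ (b1TodaDensity c ν) (Real.exp u)) (u : ℝ) :
    -(deriv (deriv W) u) + deriv W u + (1 / (c : ℂ) ^ 2) * cexp u * W u =
      (1 / 4 - ν ^ 2) * W u := by
  have h_shift (s : ℂ) (hs : s.re = σ) : b1TodaDensity c ν (s + 1) =
      (c ^ 2 * s ^ 2 + c ^ 2 * s + c ^ 2 * (1 / 4 - ν ^ 2)) • b1TodaDensity c ν s := by
    obtain ⟨hν₁, hν₂⟩ := abs_lt.mp hν
    have h_ne {μ : ℂ} (hμ : -(1 / 2 + σ) < μ.re) : μ + 1 / 2 + s ≠ 0 := fun h ↦ by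
      have h_re : μ.re + 1 / 2 + s.re = 0 := by simpa using congrArg re h
      linarith
    rw [b1TodaDensity_add_one hc.ne' (h_ne hν₁) (h_ne (by rw [neg_re]; linarith)), smul_eq_mul]
    ring
  have h_ode := exp_smul_mellinInv_exp_eq_of_shift (differentiableOn_b1TodaDensity hc.ne' _ hν)
    (rapidlyDecayingOn_b1TodaDensity hc _ hν) h_shift hW u
  have hc' : (c : ℂ) ≠ 0 := ofReal_ne_zero.mpr hc.ne'
  rw [mul_assoc, ← smul_eq_mul (cexp u), h_ode]
  simp only [smul_eq_mul]
  field_simp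
  ring

end B1Toda

end

/-- The bound on `γ.im` keeps every pole of the two Gamma factors strictly to the left of the line
of integration in the variable `s = γ' / (ic)`. -/
theorem b1_toda_wave_function_general (c : ℝ) (γ : ℂ) (hc : 0 < c) (hγ : |γ.im| < c / 2)
    (Ψ : ℝ → ℂ)
    (hΨ : Ψ = fun x : ℝ => ∫ t : ℝ,
      (c : ℂ) ^ ((2 * (t : ℂ)) / (Complex.I * c)) *
        Complex.exp (-(t : ℂ) * (x : ℂ) / (Complex.I * c)) *
        Complex.Gamma ((γ + (t : ℂ)) / (Complex.I * c) + 1 / 2) *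
        Complex.Gamma ((-γ + (t : ℂ)) / (Complex.I * c) + 1 / 2)) :
    ∀ x : ℝ,
      -(deriv (deriv Ψ) x) + deriv Ψ x + (1 / (c : ℂ) ^ 2) * Complex.exp (x : ℂ) * Ψ x =
        (γ ^ 2 / (c : ℂ) ^ 2 + 1 / 4) * Ψ x := by
  intro x
  set ν : ℂ := γ / (Complex.I * c) with hν_def
  have hν_sq : ν ^ 2 = -(γ ^ 2 / c ^ 2) := by
    rw [hν_def, div_pow, mul_pow, Complex.I_sq, neg_one_mul, div_neg]
  have hν : |ν.re| < 1 / 2 + (0 : ℝ) := by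
    have h_re : ν.re = γ.im / c := by
      rw [hν_def, div_mul_eq_div_div, Complex.div_I, Complex.div_ofReal_re]
      simp
    rw [h_re, abs_div, abs_of_pos hc, div_lt_iff₀ hc]
    linarith
  set W : ℝ → ℂ := fun u ↦ mellinInv 0 (b1TodaDensity c ν) (Real.exp u)
  have hΨW : Ψ = fun u ↦ (2 * Real.pi * c : ℂ) * W u :=
    hΨ.trans (funext (integral_b1Toda_eq_mellinInv hc γ))
  have hΨW' : deriv Ψ = fun u ↦ (2 * Real.pi * c : ℂ) * deriv W u := by
    rw [hΨW]
    exact deriv_const_mul_field' _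
  have hW := b1_toda_mellinInv hc hν (W := W) (fun _ ↦ rfl) x
  rw [hν_sq, sub_neg_eq_add] at hW
  rw [hΨW', deriv_const_mul_field, hΨW]
  linear_combination (2 * Real.pi * c : ℂ) * hW

/-- The `n = 1` Mellin-Barnes wave function
`Ψ_γ(x) = ∫_ℝ c^{2γ'/(ic)} e^{-γ'x/(ic)} Γ((γ+γ')/(ic)+1/2) Γ((-γ+γ')/(ic)+1/2) dγ'`
satisfies the one-particle `B₁` Toda equation
`(-d²/dx² + d/dx + (1/c²)eˣ)Ψ_γ = (γ²/c² + 1/4)Ψ_γ`. -/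
theorem b1_toda_wave_function (c γ : ℝ) (hc : 0 < c) (Ψ : ℝ → ℂ)
    (hΨ : Ψ = fun x : ℝ => ∫ t : ℝ,
      (c : ℂ) ^ ((2 * (t : ℂ)) / (Complex.I * c)) *
        Complex.exp (-(t : ℂ) * (x : ℂ) / (Complex.I * c)) *
        Complex.Gamma (((γ : ℂ) + (t : ℂ)) / (Complex.I * c) + 1 / 2) *
        Complex.Gamma ((-(γ : ℂ) + (t : ℂ)) / (Complex.I * c) + 1 / 2)) :
    ∀ x : ℝ,
      -(deriv (deriv Ψ) x) + deriv Ψ x + (1 / (c : ℂ) ^ 2) * Complex.exp (x : ℂ) * Ψ x =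
        ((γ : ℂ) ^ 2 / (c : ℂ) ^ 2 + 1 / 4) * Ψ x :=
  b1_toda_wave_function_general c γ hc (by simpa using hc) Ψ hΨ
end

section
/- For complex a with Re(a) > 0, the degenerate rank-one Gustafson integral holds: (1/2π)∫_R [Γ(a_1 + iz)Γ(a_1 − iz)Γ(a_2 + iz)Γ(a_2 − iz)Γ(a_3 + iz)Γ(a_3 − iz)] / [Γ(2iz)Γ(−2iz)] dz = 2·Γ(a_1+a_2)Γ(a_1+a_3)Γ(a_2+a_3), whenever Re(a_j) > 0 for j = 1,2,3. -/
open MeasureTheory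

/-!
The integrand is `s · K(s)` up to a constant, where `K` is a product of gamma functions times
`sin (2πs)`. Shifting the line of integration by one for the kernel `K` with all three parameters
raised by `1/2` shows that `a₁ ↦ a₁ + 1` multiplies the integral by `(a₁ + a₂)(a₁ + a₃)`, exactly as
it does for `Γ(a₁ + a₂) Γ(a₁ + a₃) Γ(a₂ + a₃)`. The quotient of the two is thus holomorphic and
1-periodic in `a₁`, and the decay of the gamma function keeps it below `exp (2π |Im a₁|)`. In the
coordinate `exp (2πi a₁)` it is an entire function of sublinear growth, hence constant. By symmetry
it is constant in all parameters, and at `a₁ = a₂ = a₃ = 1/2` the integral is elementary.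
-/

namespace Gustafson

open Asymptotics Bornology Complex Filter Metric Set Topology

/-! ### Holomorphic functions on the plane, on strips and under the integral sign -/

variable {E : Type*} [NormedAddCommGroup E] [NormedSpace ℂ E]

theorem differentiableOn_integral_of_dominated {α : Type*} [MeasurableSpace α] {μ : Measure α}
    {F : ℂ → α → E} {U : Set ℂ} {bound : α → ℝ} (hU : IsOpen U)
    (hmeas : ∀ z ∈ U, AEStronglyMeasurable (F z) μ)
    (hF : ∀ᵐ t ∂μ, DifferentiableOn ℂ (F · t) U) (hbound : ∀ᵐ t ∂μ, ∀ z ∈ U, ‖F z t‖ ≤ bound t)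
    (hint : Integrable bound μ) :
    DifferentiableOn ℂ (fun z ↦ ∫ t, F z t ∂μ) U := by
  intro z₀ hz₀
  obtain ⟨r, hr, hrU⟩ := Metric.isOpen_iff.1 hU z₀ hz₀
  have hclosed : ∀ z ∈ ball z₀ (r / 2), closedBall z (r / 3) ⊆ U := fun z hz w hw ↦ hrU <| by
    rw [mem_ball] at hz ⊢
    rw [mem_closedBall] at hw
    linarith [dist_triangle w z z₀]
  have hderiv_le : ∀ᵐ t ∂μ, ∀ z ∈ ball z₀ (r / 2), ‖deriv (F · t) z‖ ≤ bound t / (r / 3) := by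
    filter_upwards [hF, hbound] with t hFt hbt z hz
    refine norm_deriv_le_of_forall_mem_sphere_norm_le (by positivity) ?_ fun w hw ↦
      hbt w (hclosed z hz (sphere_subset_closedBall hw))
    exact (hFt.mono (hclosed z hz)).diffContOnCl_ball subset_rfl
  have hhasDeriv : ∀ᵐ t ∂μ, ∀ z ∈ ball z₀ (r / 2), HasDerivAt (F · t) (deriv (F · t) z) z := by
    filter_upwards [hF] with t hFt z hz
    exact (hFt.differentiableAt (hU.mem_nhds (hclosed z hz
      (mem_closedBall_self (by positivity))))).hasDerivAt
  have hderiv_meas : AEStronglyMeasurable (fun t ↦ deriv (F · t) z₀) μ := by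
    refine aestronglyMeasurable_of_tendsto_ae (𝓝[≠] z₀)
      (f := U.indicator fun w ↦ slope F z₀ w) (fun w ↦ ?_) ?_
    · by_cases hw : w ∈ U
      · rw [indicator_of_mem hw]
        exact ((hmeas w hw).sub (hmeas z₀ hz₀)).const_smul _
      · rw [indicator_of_notMem hw]
        exact aestronglyMeasurable_const
    · filter_upwards [hhasDeriv] with t ht
      refine (hasDerivAt_iff_tendsto_slope.1 (ht z₀ (mem_ball_self (by positivity)))).congr' ?_
      filter_upwards [nhdsWithin_le_nhds (hU.mem_nhds hz₀)] with w hw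
      rw [indicator_of_mem hw]
      rfl
  exact (hasDerivAt_integral_of_dominated_loc_of_deriv_le (ball_mem_nhds z₀ (by positivity))
    (eventually_of_mem (hU.mem_nhds hz₀) hmeas)
    (hint.mono' (hmeas z₀ hz₀) (hbound.mono fun t ht ↦ ht z₀ hz₀)) hderiv_meas hderiv_le
    (hint.div_const _) hhasDeriv).2.differentiableAt.differentiableWithinAt

theorem apply_eq_apply_of_differentiable_of_isLittleO_id {f : ℂ → E} (hf : Differentiable ℂ f)
    (hO : f =o[cobounded ℂ] (id : ℂ → ℂ)) (z w : ℂ) : f z = f w := by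
  refine is_const_of_deriv_eq_zero hf (fun c ↦ norm_le_zero_iff.1 ?_) z w
  refine le_of_forall_pos_le_add fun ε hε ↦ ?_
  have hsub : f =o[cobounded ℂ] fun s ↦ s - c :=
    hO.trans_isBigO (isLittleO_const_id_cobounded c).right_isBigO_sub
  obtain ⟨R, -, hR⟩ := (hasBasis_cobounded_compl_closedBall c).eventually_iff.1 (hsub.def hε)
  have hr : 0 < max R 0 + 1 := by positivity
  have hsphere : ∀ s ∈ sphere c (max R 0 + 1), ‖f s‖ ≤ ε * (max R 0 + 1) := fun s hs ↦ by
    rw [mem_sphere] at hs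
    rw [← hs, dist_eq_norm]
    exact hR fun h ↦ absurd (mem_closedBall.1 h) (by linarith [le_max_left R 0])
  have hderiv := norm_deriv_le_of_forall_mem_sphere_norm_le hr
    hf.differentiableOn.diffContOnCl hsphere
  rwa [mul_div_cancel_right₀ _ hr.ne', ← zero_add ε] at hderiv

/-- The filter of points tending to one of the two ends of the vertical strip `a ≤ re s ≤ b`, that
is `|im s| → ∞` within the strip. -/
def stripEnds (a b : ℝ) : Filter ℂ :=
  comap (fun s ↦ |s.im|) atTop ⊓ 𝓟 (re ⁻¹' Icc a b)

theorem eventually_stripEnds {a b : ℝ} {p : ℂ → Prop} :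
    (∀ᶠ s in stripEnds a b, p s) ↔
      ∃ T, ∀ s : ℂ, T ≤ |s.im| → s.re ∈ Icc a b → p s := by
  rw [stripEnds, eventually_inf_principal, eventually_comap, eventually_atTop]
  exact exists_congr fun T ↦ ⟨fun H s hs ↦ H _ hs s rfl, fun H _ ht s hs ↦ H s (hs ▸ ht)⟩

theorem tendsto_abs_im_stripEnds (a b : ℝ) : Tendsto (fun s ↦ |s.im|) (stripEnds a b) atTop :=
  tendsto_comap.mono_left inf_le_left

theorem tendsto_intervalIntegral_of_stripEnds {f : ℂ → E} {a b : ℝ} (hab : a ≤ b)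
    (hf : Tendsto f (stripEnds a b) (𝓝 0)) {u : ℝ → ℝ} (hu : Tendsto (fun T ↦ |u T|) atTop atTop) :
    Tendsto (fun T ↦ ∫ x in a..b, f (x + u T * I)) atTop (𝓝 0) := by
  refine Metric.tendsto_nhds.2 fun ε hε ↦ ?_
  have hδ : 0 < ε / (|b - a| + 1) := by positivity
  obtain ⟨T, hT⟩ := eventually_stripEnds.1 (hf.eventually (ball_mem_nhds 0 hδ))
  filter_upwards [hu.eventually_ge_atTop T] with R hR
  have hbound : ∀ x ∈ uIoc a b, ‖f (x + u R * I)‖ ≤ ε / (|b - a| + 1) := fun x hx ↦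
    (mem_ball_zero_iff.1 (hT (x + u R * I) (by simpa using hR)
      (by simpa using Ioc_subset_Icc_self (uIoc_of_le hab ▸ hx)))).le
  rw [dist_zero_right]
  refine (intervalIntegral.norm_integral_le_of_norm_le_const hbound).trans_lt ?_
  rw [div_mul_eq_mul_div, div_lt_iff₀ (by positivity)]
  nlinarith

theorem integral_vertical_eq_of_tendsto {f : ℂ → E} {a b : ℝ} (hab : a ≤ b)
    (hf : DifferentiableOn ℂ f (re ⁻¹' Icc a b))
    (ha : Integrable fun t : ℝ ↦ f (a + t * I)) (hb : Integrable fun t : ℝ ↦ f (b + t * I))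
    (hzero : Tendsto f (stripEnds a b) (𝓝 0)) :
    ∫ t : ℝ, f (b + t * I) = ∫ t : ℝ, f (a + t * I) := by
  have hrect (T : ℝ) : (∫ t in -T..T, f (b + t * I)) - ∫ t in -T..T, f (a + t * I) =
      I • ((∫ x in a..b, f (x + (-T : ℝ) * I)) - ∫ x in a..b, f (x + T * I)) := by
    have h := integral_boundary_rect_eq_zero_of_differentiableOn f (a + (-T : ℝ) * I) (b + T * I)
      (hf.mono fun s hs ↦ by simpa [uIcc_of_le hab] using hs.1)
    simp only [add_re, mul_re, ofReal_re, I_re, mul_zero, ofReal_im, I_im, mul_one, sub_self,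
      add_zero, add_im, mul_im, zero_add] at h
    rw [← sub_eq_zero, ← smul_zero (-I), ← h]
    simp only [smul_add, smul_sub, smul_smul, neg_mul, I_mul_I, neg_neg, one_smul, neg_smul]
    abel
  have hvert {c : ℝ} (hc : Integrable fun t : ℝ ↦ f (c + t * I)) :
      Tendsto (fun T : ℝ ↦ ∫ t in -T..T, f (c + t * I)) atTop (𝓝 (∫ t : ℝ, f (c + t * I))) :=
    intervalIntegral_tendsto_integral hc tendsto_neg_atTop_atBot tendsto_id
  refine sub_eq_zero.1 (tendsto_nhds_unique ((hvert hb).sub (hvert ha)) ?_)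
  simp_rw [hrect]
  have hbottom := tendsto_intervalIntegral_of_stripEnds hab hzero (u := fun T ↦ -T)
    (by simpa only [abs_neg] using tendsto_abs_atTop_atTop)
  have htop := tendsto_intervalIntegral_of_stripEnds hab hzero tendsto_abs_atTop_atTop
  simpa only [sub_self, smul_zero] using (hbottom.sub htop).const_smul I

section Periodic

open Function.Periodic

variable {f : ℂ → ℂ} {h : ℝ}

theorem isLittleO_comp_invQParam (hh : 0 < h) {l : Filter ℂ}
    (hl : Tendsto (fun q : ℂ ↦ |Real.log ‖q‖|) l atTop)
    (hO : f =o[comap (fun s ↦ |s.im|) atTop] fun s ↦ Real.exp (2 * Real.pi * |s.im| / h)) :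
    (f ∘ invQParam h) =o[l] fun q ↦ Real.exp |Real.log ‖q‖| := by
  have him (q : ℂ) : |(invQParam h q).im| = h / (2 * Real.pi) * |Real.log ‖q‖| := by
    rw [im_invQParam, abs_mul, abs_div, abs_neg, abs_of_pos hh, abs_of_pos Real.two_pi_pos]
  have htend : Tendsto (invQParam h) l (comap (fun s ↦ |s.im|) atTop) :=
    tendsto_comap_iff.2 <| (hl.const_mul_atTop (by positivity)).congr fun q ↦ (him q).symm
  refine (hO.comp_tendsto htend).congr_right fun q ↦ ?_
  rw [Function.comp_apply, him]
  field_simp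

theorem differentiable_cuspFunction (hh : 0 < h) (hf : Differentiable ℂ f)
    (hper : Function.Periodic f h)
    (hO : f =o[comap (fun s ↦ |s.im|) atTop] fun s ↦ Real.exp (2 * Real.pi * |s.im| / h)) :
    Differentiable ℂ (cuspFunction h f) := by
  have hlog : Tendsto (fun q : ℂ ↦ |Real.log ‖q‖|) (𝓝[≠] 0) atTop :=
    tendsto_abs_atBot_atTop.comp (Real.tendsto_log_nhdsGT_zero.comp tendsto_norm_nhdsNE_zero)
  have hpole : (f ∘ invQParam h) =o[𝓝[≠] 0] fun q ↦ (q - 0)⁻¹ := by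
    refine (isLittleO_comp_invQParam hh hlog hO).trans_isBigO (IsBigO.of_bound 1 ?_)
    filter_upwards [self_mem_nhdsWithin, nhdsWithin_le_nhds (ball_mem_nhds (0 : ℂ) one_pos)]
      with q hq hq1
    have hq0 : 0 < ‖q‖ := norm_pos_iff.2 hq
    rw [abs_of_nonpos (Real.log_nonpos hq0.le (mem_ball_zero_iff.1 hq1).le), Real.exp_neg,
      Real.exp_log hq0, norm_inv, norm_inv, norm_norm, one_mul, sub_zero]
  have hconst : (fun _ ↦ (f ∘ invQParam h) 0) =o[𝓝[≠] 0] fun q : ℂ ↦ (q - 0)⁻¹ := by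
    refine (isLittleO_const_left.2 (.inr ?_))
    simpa [Function.comp_def] using tendsto_norm_inv_nhdsNE_zero_atTop (α := ℂ)
  refine differentiableOn_univ.1 (differentiableOn_update_limUnder_of_isLittleO univ_mem
    (fun q hq ↦ ?_) (hpole.sub hconst))
  have hq0 : q ≠ 0 := hq.2
  have hcusp := differentiableAt_cuspFunction hh.ne' hper (hf (invQParam h q))
  rw [qParam_right_inv hh.ne' hq0] at hcusp
  refine (hcusp.congr_of_eventuallyEq ?_).differentiableWithinAt
  filter_upwards [isOpen_ne.mem_nhds hq0] with p hp
  exact (cuspFunction_eq_of_nonzero h f hp).symm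

theorem apply_eq_apply_of_periodic_of_isLittleO (hh : 0 < h) (hf : Differentiable ℂ f)
    (hper : Function.Periodic f h)
    (hO : f =o[comap (fun s ↦ |s.im|) atTop] fun s ↦ Real.exp (2 * Real.pi * |s.im| / h))
    (z w : ℂ) : f z = f w := by
  have hlog : Tendsto (fun q : ℂ ↦ |Real.log ‖q‖|) (cobounded ℂ) atTop :=
    tendsto_abs_atTop_atTop.comp (Real.tendsto_log_atTop.comp tendsto_norm_cobounded_atTop)
  have hcusp : cuspFunction h f =o[cobounded ℂ] (id : ℂ → ℂ) := by
    refine ((isLittleO_comp_invQParam hh hlog hO).trans_isBigO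
      (IsBigO.of_bound 1 ?_)).congr' ?_ EventuallyEq.rfl
    · filter_upwards [tendsto_norm_cobounded_atTop.eventually_ge_atTop 1] with q hq
      rw [abs_of_nonneg (Real.log_nonneg hq), Real.exp_log (one_pos.trans_le hq), norm_norm,
        one_mul, id]
    · filter_upwards [tendsto_norm_cobounded_atTop.eventually_gt_atTop 0] with q hq
      exact (cuspFunction_eq_of_nonzero h f (norm_pos_iff.1 hq)).symm
  rw [← eq_cuspFunction hh.ne' hper z, ← eq_cuspFunction hh.ne' hper w]
  exact apply_eq_apply_of_differentiable_of_isLittleO_id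
    (differentiable_cuspFunction hh hf hper hO) hcusp _ _

theorem exists_differentiable_periodic_eqOn {f : ℂ → E} (hh : 0 < h)
    (hf : DifferentiableOn ℂ f {s | 0 < s.re}) (hper : ∀ s : ℂ, 0 < s.re → f (s + h) = f s) :
    ∃ F : ℂ → E, Differentiable ℂ F ∧ Function.Periodic F h ∧ EqOn F f {s | 0 < s.re} := by
  have hshift (s : ℂ) (hs : 0 < s.re) (k : ℕ) : f (s + k * h) = f s := by
    induction k with
    | zero => simp
    | succ k ih =>
      have hre : 0 < (s + k * h).re := by
        rw [← ofReal_natCast, ← ofReal_mul, add_re, ofReal_re]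
        positivity
      rw [← ih, ← hper _ hre]
      push_cast
      ring_nf
  choose n hn using fun s : ℂ ↦ exists_nat_gt (-s.re / h)
  have hn_re (s : ℂ) {m : ℕ} (hm : -s.re / h < m) : 0 < (s + m * h).re := by
    rw [div_lt_iff₀ hh] at hm
    simp only [add_re, mul_re, natCast_re, ofReal_re, natCast_im, ofReal_im]
    linarith
  have hF (s : ℂ) {m : ℕ} (hm : -s.re / h < m) : f (s + n s * h) = f (s + m * h) := by
    rw [← hshift _ (hn_re s (hn s)) m, ← hshift _ (hn_re s hm) (n s)]
    ring_nf
  refine ⟨fun s ↦ f (s + n s * h), fun s ↦ ?_, fun s ↦ ?_, fun s hs ↦ hshift s hs _⟩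
  · have hopen : {w : ℂ | -w.re / h < n s} ∈ 𝓝 s :=
      (isOpen_lt (by fun_prop) continuous_const).mem_nhds (hn s)
    have hfs : DifferentiableAt ℂ f (s + n s * h) :=
      hf.differentiableAt ((isOpen_lt continuous_const continuous_re).mem_nhds (hn_re s (hn s)))
    refine DifferentiableAt.congr_of_eventuallyEq
      (hfs.comp s (differentiableAt_id.add_const _)) ?_
    filter_upwards [hopen] with w hw using hF w hw
  · have hs : -s.re / h < (n (s + h) + 1 : ℕ) := by
      have := hn (s + h)
      rw [div_lt_iff₀ hh] at this ⊢
      push_cast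
      simp only [add_re, ofReal_re] at this
      linarith
    refine Eq.trans ?_ (hF s hs).symm
    push_cast
    ring_nf

theorem apply_eq_apply_of_periodic_of_isLittleO_stripEnds (hh : 0 < h)
    (hf : DifferentiableOn ℂ f {s | 0 < s.re}) (hper : ∀ s : ℂ, 0 < s.re → f (s + h) = f s)
    {a : ℝ} (ha : 0 < a)
    (hO : f =o[stripEnds a (a + h)] fun s ↦ Real.exp (2 * Real.pi * |s.im| / h))
    {z w : ℂ} (hz : 0 < z.re) (hw : 0 < w.re) : f z = f w := by
  obtain ⟨F, hFdiff, hFper, hFf⟩ := exists_differentiable_periodic_eqOn hh hf hper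
  rw [← hFf hz, ← hFf hw]
  refine apply_eq_apply_of_periodic_of_isLittleO hh hFdiff hFper
    (isLittleO_iff.2 fun c hc ↦ ?_) z w
  obtain ⟨T, hT⟩ := eventually_stripEnds.1 (hO.def hc)
  filter_upwards [tendsto_comap.eventually_ge_atTop T] with s hs
  obtain ⟨k, hk, -⟩ := existsUnique_add_zsmul_mem_Ico hh s.re a
  have him : (s + k * h).im = s.im := by simp
  have hre : (s + k * h).re ∈ Icc a (a + h) := by
    simpa using Ico_subset_Icc_self hk
  have hbound := hT (s + k * h) (him ▸ hs) hre
  rwa [← hFf (ha.trans_le hre.1), hFper.int_mul k s, him] at hbound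

end Periodic

/-! ### Growth of the gamma function on vertical strips -/

theorem differentiableAt_Gamma_of_re_pos {s : ℂ} (hs : 0 < s.re) :
    DifferentiableAt ℂ Complex.Gamma s := by
  refine differentiableAt_Gamma s fun m hm ↦ hs.not_ge ?_
  simp [hm]

theorem norm_cpow_mul_exp_neg_mul {s r : ℂ} {t : ℝ} (ht : 0 < t) :
    ‖(t : ℂ) ^ (s - 1) * cexp (-(r * t))‖ = t ^ (s.re - 1) * Real.exp (-(r.re * t)) := by
  rw [norm_mul, norm_cpow_eq_rpow_re_of_pos ht, norm_exp]
  simp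

theorem integrableOn_rpow_mul_exp_neg_mul {x r : ℝ} (hx : 0 < x) (hr : 0 < r) :
    IntegrableOn (fun t : ℝ ↦ t ^ (x - 1) * Real.exp (-(r * t))) (Ioi 0) := by
  simpa using integrableOn_rpow_mul_exp_neg_mul_rpow (s := x - 1) (p := 1) (by linarith) one_pos hr

theorem differentiableOn_integral_cpow_mul_exp_neg_mul {s : ℂ} (hs : 0 < s.re) :
    DifferentiableOn ℂ (fun r : ℂ ↦ ∫ t : ℝ in Ioi 0, (t : ℂ) ^ (s - 1) * cexp (-(r * t)))
      {r | 0 < r.re} := by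
  intro r₀ hr₀
  have hU : IsOpen {r : ℂ | r₀.re / 2 < r.re} := isOpen_lt continuous_const continuous_re
  refine ((differentiableOn_integral_of_dominated hU (fun r _ ↦ ?_) ?_ ?_
    (integrableOn_rpow_mul_exp_neg_mul hs (half_pos hr₀))).differentiableAt
      (hU.mem_nhds (show r₀.re / 2 < r₀.re from half_lt_self hr₀))).differentiableWithinAt
  · refine (ContinuousOn.mul (fun t ht ↦ ?_) (by fun_prop)).aestronglyMeasurable measurableSet_Ioi
    exact (continuousAt_ofReal_cpow_const t _ (.inr (ne_of_gt ht))).continuousWithinAt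
  · exact .of_forall fun t ↦ by fun_prop
  · filter_upwards [ae_restrict_mem measurableSet_Ioi] with t ht r hr
    rw [mem_Ioi] at ht
    rw [norm_cpow_mul_exp_neg_mul ht]
    gcongr

theorem integral_cpow_mul_exp_neg_mul_Ioi {s r : ℂ} (hs : 0 < s.re) (hr : 0 < r.re) :
    ∫ t : ℝ in Ioi 0, (t : ℂ) ^ (s - 1) * cexp (-(r * t)) = r ^ (-s) * Complex.Gamma s := by
  have hU : IsOpen {r : ℂ | 0 < r.re} := isOpen_lt continuous_const continuous_re
  have hpow : DifferentiableOn ℂ (fun r : ℂ ↦ r ^ (-s) * Complex.Gamma s) {r | 0 < r.re} :=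
    fun r hr ↦ ((differentiableAt_id.cpow_const (.inl hr)).mul_const _).differentiableWithinAt
  have hreal : ∀ᶠ x : ℝ in 𝓝[>] 1, ∫ t : ℝ in Ioi 0, (t : ℂ) ^ (s - 1) * cexp (-(x * t)) =
      (x : ℂ) ^ (-s) * Complex.Gamma s := by
    filter_upwards [self_mem_nhdsWithin] with x hx
    have hx0 : 0 < x := one_pos.trans hx
    rw [Complex.integral_cpow_mul_exp_neg_mul_Ioi hs hx0, one_div, cpow_neg,
      inv_cpow _ _ (by rw [arg_ofReal_of_nonneg hx0.le]; exact Real.pi_pos.ne)]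
  have htend : Tendsto ((↑) : ℝ → ℂ) (𝓝[>] 1) (𝓝[≠] 1) :=
    tendsto_nhdsWithin_iff.2 ⟨(continuous_ofReal.tendsto' 1 1 (by simp)).mono_left
      nhdsWithin_le_nhds, by
        filter_upwards [self_mem_nhdsWithin] with x hx using by simpa using (ne_of_gt hx)⟩
  exact ((differentiableOn_integral_cpow_mul_exp_neg_mul hs).analyticOnNhd hU
    ).eqOn_of_preconnected_of_frequently_eq (hpow.analyticOnNhd hU)
    (convex_halfSpace_re_gt 0).isPreconnected (by simp : (1 : ℂ) ∈ _)
    (htend.frequently hreal.frequently) hr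

/-- Euler's integral taken along the ray of argument `θ`. -/
theorem exp_mul_im_mul_norm_Gamma_le {s : ℂ} (hs : 0 < s.re) {θ : ℝ}
    (hθ : |θ| < Real.pi / 2) :
    Real.exp (θ * s.im) * ‖Complex.Gamma s‖ ≤ Real.Gamma s.re / Real.cos θ ^ s.re := by
  have hcos : 0 < Real.cos θ := Real.cos_pos_of_mem_Ioo ⟨(abs_lt.1 hθ).1, (abs_lt.1 hθ).2⟩
  have hre : (cexp (θ * I)).re = Real.cos θ := exp_ofReal_mul_I_re θ
  have hnorm : ‖cexp (θ * I) ^ (-s)‖ = Real.exp (θ * s.im) := by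
    have him : (θ * I).im = θ := by simp
    have hlog : Complex.log (cexp (θ * I)) = θ * I :=
      log_exp (by rw [him]; linarith [(abs_lt.1 hθ).1, Real.pi_pos])
        (by rw [him]; linarith [(abs_lt.1 hθ).2, Real.pi_pos])
    rw [cpow_def_of_ne_zero (exp_ne_zero _), hlog, norm_exp]
    simp
  calc Real.exp (θ * s.im) * ‖Complex.Gamma s‖
      = ‖∫ t : ℝ in Ioi 0, (t : ℂ) ^ (s - 1) * cexp (-(cexp (θ * I) * t))‖ := by
        rw [integral_cpow_mul_exp_neg_mul_Ioi hs (hre ▸ hcos), norm_mul, hnorm]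
    _ ≤ ∫ t : ℝ in Ioi 0, t ^ (s.re - 1) * Real.exp (-(Real.cos θ * t)) := by
        refine (norm_integral_le_integral_norm _).trans_eq
          (setIntegral_congr_fun measurableSet_Ioi fun t ht ↦ ?_)
        rw [norm_cpow_mul_exp_neg_mul ht, hre]
    _ = Real.Gamma s.re / Real.cos θ ^ s.re := by
        rw [Real.integral_rpow_mul_exp_neg_mul_Ioi hs hcos, Real.div_rpow one_pos.le hcos.le,
          Real.one_rpow, one_div_mul_eq_div]

theorem exists_norm_Gamma_le {a b κ : ℝ} (ha : 0 < a) (hκ : |κ| < Real.pi / 2) :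
    ∃ C > 0, ∀ s : ℂ, s.re ∈ Icc a b →
      ‖Complex.Gamma s‖ ≤ C * Real.exp (-κ * |s.im|) := by
  have hcos : 0 < Real.cos κ := Real.cos_pos_of_mem_Ioo ⟨(abs_lt.1 hκ).1, (abs_lt.1 hκ).2⟩
  have hcont : ContinuousOn (fun x ↦ Real.Gamma x / Real.cos κ ^ x) (Icc a b) :=
    (Real.differentiableOn_Gamma_Ioi.continuousOn.mono fun x hx ↦ ha.trans_le hx.1).div
      (Real.continuous_const_rpow hcos.ne').continuousOn fun x _ ↦ (Real.rpow_pos_of_pos hcos x).ne'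
  obtain ⟨C, hC⟩ := isCompact_Icc.exists_bound_of_continuousOn hcont
  refine ⟨max C 1, by positivity, fun s hs ↦ ?_⟩
  have hre : 0 < s.re := ha.trans_le hs.1
  obtain ⟨θ, hθ, hθs⟩ : ∃ θ : ℝ, |θ| = |κ| ∧ θ * s.im = κ * |s.im| := by
    rcases abs_cases s.im with h | h
    · exact ⟨κ, rfl, by rw [h.1]⟩
    · exact ⟨-κ, abs_neg κ, by rw [h.1]; ring⟩
  have hcosθ : Real.cos θ = Real.cos κ := by rw [← Real.cos_abs, hθ, Real.cos_abs]
  have hrot := exp_mul_im_mul_norm_Gamma_le hre (hθ ▸ hκ)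
  rw [hθs, hcosθ] at hrot
  rw [neg_mul, Real.exp_neg, ← div_eq_mul_inv, le_div_iff₀' (Real.exp_pos _)]
  exact hrot.trans ((le_abs_self _).trans ((hC _ hs).trans (le_max_left _ _)))

theorem norm_sin_le (z : ℂ) : ‖Complex.sin z‖ ≤ Real.exp |z.im| := by
  have hneg : ‖cexp (-z * I)‖ ≤ Real.exp |z.im| := by
    simpa [norm_exp] using le_abs_self z.im
  have hpos : ‖cexp (z * I)‖ ≤ Real.exp |z.im| := by
    simpa [norm_exp] using neg_le_abs z.im
  rw [Complex.sin, norm_div, norm_mul, norm_I, mul_one, Complex.norm_two]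
  linarith [norm_sub_le (cexp (-z * I)) (cexp (z * I))]

/-- Valid at integers too, where `Γ` has the value `0` at its poles and both sides vanish. -/
theorem inv_Gamma_mul_Gamma_neg (s : ℂ) :
    (Complex.Gamma s * Complex.Gamma (-s))⁻¹ = -s * Complex.sin (Real.pi * s) / Real.pi := by
  rcases eq_or_ne s 0 with rfl | hs
  · simp
  have h := Complex.Gamma_mul_Gamma_one_sub s
  rw [sub_eq_neg_add, Complex.Gamma_add_one _ (neg_ne_zero.2 hs)] at h
  have hprod : Complex.Gamma s * Complex.Gamma (-s) = Real.pi / Complex.sin (Real.pi * s) / -s := by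
    rw [eq_div_iff (neg_ne_zero.2 hs), ← h]
    ring
  rw [hprod, div_div, inv_div, mul_comm (Complex.sin _)]

theorem tendsto_const_sub_stripEnds (w : ℂ) (a b : ℝ) :
    Tendsto (fun s ↦ w - s) (stripEnds a b) (stripEnds (w.re - b) (w.re - a)) := fun S hS ↦ by
  obtain ⟨T, hT⟩ := eventually_stripEnds.1 hS
  refine eventually_stripEnds.2 ⟨T + |w.im|, fun s hs hre ↦ hT _ ?_ ?_⟩
  · have := abs_sub_abs_le_abs_sub s.im w.im
    rw [sub_im, abs_sub_comm]
    linarith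
  · exact ⟨sub_le_sub_left hre.2 _, sub_le_sub_left hre.1 _⟩

theorem norm_Gamma_le_norm_Gamma_add_nat {s : ℂ} (hs : 1 ≤ |s.im|) (n : ℕ) :
    ‖Complex.Gamma s‖ ≤ ‖Complex.Gamma (s + n)‖ := by
  induction n with
  | zero => simp
  | succ n ih =>
    have hnorm : 1 ≤ ‖s + n‖ := hs.trans (by simpa using abs_im_le_norm (s + n))
    have hne : s + n ≠ 0 := norm_pos_iff.1 (one_pos.trans_le hnorm)
    rw [Nat.cast_succ, ← add_assoc, Complex.Gamma_add_one _ hne, norm_mul]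
    exact ih.trans (le_mul_of_one_le_left (norm_nonneg _) hnorm)

theorem isBigO_Gamma_stripEnds (a b : ℝ) {κ : ℝ} (hκ : |κ| < Real.pi / 2) :
    Complex.Gamma =O[stripEnds a b] fun s ↦ Real.exp (-κ * |s.im|) := by
  obtain ⟨n, hn⟩ := exists_nat_gt (-a)
  obtain ⟨C, -, hC⟩ := exists_norm_Gamma_le (a := a + n) (b := b + n) (by linarith) hκ
  refine .of_bound C (eventually_stripEnds.2 ⟨1, fun s hs hre ↦ ?_⟩)
  rw [Real.norm_of_nonneg (Real.exp_pos _).le]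
  refine (norm_Gamma_le_norm_Gamma_add_nat hs n).trans ?_
  simpa using hC (s + n) (by simpa using hre)

theorem inv_Gamma_eq {s : ℂ} (hs : s.im ≠ 0) :
    (Complex.Gamma s)⁻¹ = Complex.Gamma (1 - s) * Complex.sin (Real.pi * s) / Real.pi := by
  have hne : Complex.Gamma (1 - s) ≠ 0 := Complex.Gamma_ne_zero fun m hm ↦ hs <| by
    simpa using congrArg im hm
  rw [← inv_inj, inv_inv, inv_div, mul_comm, ← div_div, ← Complex.Gamma_mul_Gamma_one_sub,
    mul_div_cancel_right₀ _ hne]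

theorem isBigO_Gamma_const_sub_stripEnds (a b : ℝ) {κ : ℝ} (hκ : |κ| < Real.pi / 2) (w : ℂ) :
    (fun s ↦ Complex.Gamma (w - s)) =O[stripEnds a b] fun s ↦ Real.exp (-κ * |s.im|) := by
  refine ((isBigO_Gamma_stripEnds _ _ hκ).comp_tendsto (tendsto_const_sub_stripEnds w a b)).trans
    (.of_bound (Real.exp (|κ| * |w.im|)) (.of_forall fun s ↦ ?_))
  have him : |-κ * (|(w - s).im| - |s.im|)| ≤ |κ| * |w.im| := by
    have h := abs_abs_sub_abs_le (w - s).im (-s.im)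
    rw [abs_neg, sub_neg_eq_add, ← add_im, sub_add_cancel] at h
    rw [abs_mul, abs_neg]
    exact mul_le_mul_of_nonneg_left h (abs_nonneg κ)
  rw [Function.comp_apply, Real.norm_of_nonneg (Real.exp_pos _).le,
    Real.norm_of_nonneg (Real.exp_pos _).le, ← Real.exp_add, Real.exp_le_exp]
  linarith [(abs_le.1 him).2]

theorem isBigO_inv_Gamma_add_stripEnds (a b : ℝ) {κ : ℝ} (hκ : |κ| < Real.pi / 2) (w : ℂ) :
    (fun s ↦ (Complex.Gamma (s + w))⁻¹) =O[stripEnds a b]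
      fun s ↦ Real.exp ((Real.pi - κ) * |s.im|) := by
  have hsin : (fun s ↦ Complex.sin (Real.pi * (s + w))) =O[stripEnds a b]
      fun s ↦ Real.exp (Real.pi * |s.im|) := by
    refine .of_bound (Real.exp (Real.pi * |w.im|)) (.of_forall fun s ↦ (norm_sin_le _).trans ?_)
    rw [Real.norm_of_nonneg (Real.exp_pos _).le, ← Real.exp_add, Real.exp_le_exp, im_ofReal_mul,
      add_im, abs_mul, abs_of_pos Real.pi_pos]
    nlinarith [abs_add_le s.im w.im, Real.pi_pos]
  refine (((isBigO_Gamma_const_sub_stripEnds a b hκ (1 - w)).mul hsin).const_mul_left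
    (Real.pi : ℂ)⁻¹).congr' ?_ (.of_forall fun s ↦ ?_)
  · filter_upwards [eventually_stripEnds.2 ⟨|w.im| + 1, fun s hs _ ↦ hs⟩] with s hs
    rw [inv_Gamma_eq, sub_sub, add_comm w, div_eq_inv_mul]
    intro h
    rw [add_im, add_eq_zero_iff_eq_neg] at h
    rw [h, abs_neg] at hs
    linarith
  · exact (Real.exp_add _ _).symm.trans (by ring_nf)

/-! ### Two real integrals -/

theorem integrable_abs_pow_mul_exp_neg_mul_abs (n : ℕ) {κ : ℝ} (hκ : 0 < κ) :
    Integrable fun t : ℝ ↦ |t| ^ n * Real.exp (-κ * |t|) := by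
  have h := integrableOn_rpow_mul_exp_neg_mul_rpow (s := n) (p := 1)
    (neg_one_lt_zero.trans_le n.cast_nonneg) one_pos hκ
  simpa using (integrable_fun_norm_addHaar (volume : Measure ℝ)
    (f := fun t ↦ t ^ n * Real.exp (-κ * t))).2 (by simpa using h)

theorem integral_mul_sinh_div_cosh_sq :
    ∫ x : ℝ, x * Real.sinh x / Real.cosh x ^ 2 = Real.pi := by
  have hderiv : ∀ x : ℝ, HasDerivAt (fun x ↦ Real.arctan (Real.sinh x) - x / Real.cosh x)
      (x * Real.sinh x / Real.cosh x ^ 2) x := fun x ↦ by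
    have hc := (Real.cosh_pos x).ne'
    refine ((Real.hasDerivAt_sinh x).arctan.sub
      ((hasDerivAt_id x).div (Real.hasDerivAt_cosh x) hc)).congr_deriv ?_
    rw [← Real.cosh_sq', id]
    field_simp
    ring
  have htend : Tendsto (fun x : ℝ ↦ Real.arctan (Real.sinh x) - x / Real.cosh x) atTop
      (𝓝 (Real.pi / 2 - 0)) := by
    refine ((Real.tendsto_arctan_atTop.mono_right nhdsWithin_le_nhds).comp
      Real.sinhOrderIso.tendsto_atTop).sub ?_
    · refine squeeze_zero' (g := fun x ↦ 2 * (x ^ 1 * Real.exp (-x))) ?_ ?_ ?_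
      · filter_upwards [eventually_ge_atTop 0] with x hx
        have := Real.cosh_pos x
        positivity
      · filter_upwards [eventually_ge_atTop 0] with x hx
        rw [div_le_iff₀ (Real.cosh_pos x), Real.cosh_eq]
        have : Real.exp (-x) * Real.exp x = 1 := by rw [← Real.exp_add]; simp
        nlinarith [mul_nonneg hx (sq_nonneg (Real.exp (-x)))]
      · simpa using (Real.tendsto_pow_mul_exp_neg_atTop_nhds_zero 1).const_mul 2
  have hIoi := integral_Ioi_of_hasDerivAt_of_nonneg' (a := 0) (fun x _ ↦ hderiv x)
    (fun x hx ↦ div_nonneg (mul_nonneg (le_of_lt hx) (Real.sinh_nonneg_iff.2 (le_of_lt hx)))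
      (sq_nonneg _)) htend
  have habs : (fun x : ℝ ↦ x * Real.sinh x / Real.cosh x ^ 2) =
      fun x ↦ |x| * Real.sinh |x| / Real.cosh |x| ^ 2 := funext fun x ↦ by
    rcases abs_cases x with h | h <;> simp [h.1]
  rw [habs, integral_comp_abs (f := fun x ↦ x * Real.sinh x / Real.cosh x ^ 2), hIoi,
    Real.sinh_zero, Real.arctan_zero, zero_div, sub_zero, sub_zero, sub_zero,
    mul_div_cancel₀ _ two_ne_zero]

/-! ### The Gustafson integral -/

/-- The product `Γ(a + s) Γ(a - s)`, even in `s`, through which each parameter enters the integral.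
-/
noncomputable def gammaPair (a s : ℂ) : ℂ :=
  Complex.Gamma (a + s) * Complex.Gamma (a - s)

theorem gammaPair_neg (a s : ℂ) : gammaPair a (-s) = gammaPair a s := by
  rw [gammaPair, gammaPair, sub_neg_eq_add, ← sub_eq_add_neg, mul_comm]

theorem gammaPair_add_half_add_half {a s : ℂ} (h : a + s ≠ 0) :
    gammaPair (a + 1 / 2) (s + 1 / 2) = (a + s) * gammaPair a s := by
  rw [gammaPair, gammaPair, ← mul_assoc, ← Complex.Gamma_add_one _ h]
  ring_nf

theorem gammaPair_add_half_sub_half {a s : ℂ} (h : a - s ≠ 0) :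
    gammaPair (a + 1 / 2) (s - 1 / 2) = (a - s) * gammaPair a s := by
  rw [← gammaPair_neg, neg_sub', sub_neg_eq_add, gammaPair_add_half_add_half h, gammaPair_neg,
    ← sub_eq_add_neg]

theorem gammaPair_add_one {a s : ℂ} (h : a + s ≠ 0) (h' : a - s ≠ 0) :
    gammaPair (a + 1) s = (a + s) * (a - s) * gammaPair a s := by
  rw [gammaPair, gammaPair, add_right_comm, add_sub_right_comm, Complex.Gamma_add_one _ h,
    Complex.Gamma_add_one _ h']
  ring

theorem gammaPair_half (s : ℂ) : gammaPair (1 / 2) s = Real.pi / Complex.cos (Real.pi * s) := by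
  have h := Complex.Gamma_mul_Gamma_one_sub (1 / 2 + s)
  rw [mul_add, mul_one_div, add_comm (_ / _) (_ * s), Complex.sin_add_pi_div_two] at h
  rw [gammaPair, ← h]
  ring_nf

theorem differentiableAt_gammaPair {f g : ℂ → ℂ} {z : ℂ} (hf : DifferentiableAt ℂ f z)
    (hg : DifferentiableAt ℂ g z) (h : |(g z).re| < (f z).re) :
    DifferentiableAt ℂ (fun w ↦ gammaPair (f w) (g w)) z := by
  have hre := abs_lt.1 h
  have hadd : 0 < (f z + g z).re := by
    rw [add_re]
    linarith
  have hsub : 0 < (f z - g z).re := by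
    rw [sub_re]
    linarith
  exact ((differentiableAt_Gamma_of_re_pos hadd).comp z (hf.add hg)).mul
    ((differentiableAt_Gamma_of_re_pos hsub).comp z (hf.sub hg))

theorem exists_norm_gammaPair_le {α β r κ : ℝ} (hr : r < α) (hκ0 : 0 ≤ κ) (hκ : κ < Real.pi / 2) :
    ∃ C > 0, ∀ a s : ℂ, a.re ∈ Icc α β → |s.re| ≤ r →
      ‖gammaPair a s‖ ≤ C * Real.exp (-2 * κ * |s.im|) := by
  obtain ⟨C, hC, hΓ⟩ := exists_norm_Gamma_le (b := β + r) (sub_pos.2 hr)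
    (by rwa [abs_of_nonneg hκ0])
  refine ⟨C ^ 2, by positivity, fun a s ha hs ↦ ?_⟩
  have hs' := abs_le.1 hs
  have hadd : (a + s).re ∈ Icc (α - r) (β + r) := by
    rw [add_re]
    exact ⟨by linarith [ha.1], by linarith [ha.2]⟩
  have hsub : (a - s).re ∈ Icc (α - r) (β + r) := by
    rw [sub_re]
    exact ⟨by linarith [ha.1], by linarith [ha.2]⟩
  have him : 2 * |s.im| ≤ |(a + s).im| + |(a - s).im| := by
    have h := abs_sub (a + s).im (a - s).im
    rwa [add_im, sub_im, add_sub_sub_cancel, ← two_mul, abs_mul, abs_two] at h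
  calc ‖gammaPair a s‖
      ≤ C * Real.exp (-κ * |(a + s).im|) * (C * Real.exp (-κ * |(a - s).im|)) := by
        rw [gammaPair, norm_mul]
        gcongr
        · exact hΓ _ hadd
        · exact hΓ _ hsub
    _ = C ^ 2 * Real.exp (-κ * (|(a + s).im| + |(a - s).im|)) := by
        rw [mul_add, Real.exp_add]
        ring
    _ ≤ C ^ 2 * Real.exp (-2 * κ * |s.im|) := by
        refine mul_le_mul_of_nonneg_left (Real.exp_le_exp.2 ?_) (by positivity)
        nlinarith

/-- The kernel `K(s) = ∏ⱼ Γ(aⱼ + s) Γ(aⱼ - s) · sin (2πs)`, whose unit shifts give the recurrence of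
the Gustafson integral. -/
noncomputable def gustafsonKernel (a b c s : ℂ) : ℂ :=
  gammaPair a s * gammaPair b s * gammaPair c s * Complex.sin (2 * Real.pi * s)

theorem exists_norm_gustafsonKernel_le {α β r : ℝ} {b c : ℂ} (hα : r < α) (hb : r < b.re)
    (hc : r < c.re) :
    ∃ C > 0, ∀ a s : ℂ, a.re ∈ Icc α β → |s.re| ≤ r →
      ‖gustafsonKernel a b c s‖ ≤ C * Real.exp (-(2 * Real.pi / 5) * |s.im|) := by
  -- With `κ = 2π/5`, the decay `6κ` of the three pairs beats the growth `2π` of the sine.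
  have hκ0 : 0 ≤ 2 * Real.pi / 5 := by positivity
  have hκ : 2 * Real.pi / 5 < Real.pi / 2 := by linarith [Real.pi_pos]
  obtain ⟨A, hA0, hA⟩ := exists_norm_gammaPair_le (β := β) hα hκ0 hκ
  obtain ⟨B, hB0, hB⟩ := exists_norm_gammaPair_le (β := b.re) hb hκ0 hκ
  obtain ⟨C, hC0, hC⟩ := exists_norm_gammaPair_le (β := c.re) hc hκ0 hκ
  refine ⟨A * B * C, by positivity, fun a s ha hs ↦ ?_⟩
  have hsin : ‖Complex.sin (2 * Real.pi * s)‖ ≤ Real.exp (2 * Real.pi * |s.im|) := by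
    refine (norm_sin_le _).trans_eq ?_
    rw [← ofReal_ofNat, ← ofReal_mul, im_ofReal_mul, abs_mul, abs_of_pos Real.two_pi_pos]
  rw [gustafsonKernel, norm_mul, norm_mul, norm_mul]
  refine (mul_le_mul (mul_le_mul (mul_le_mul (hA a s ha hs) (hB b s ⟨le_rfl, le_rfl⟩ hs)
    (norm_nonneg _) (by positivity)) (hC c s ⟨le_rfl, le_rfl⟩ hs) (norm_nonneg _) (by positivity))
    hsin (norm_nonneg _) (by positivity)).trans_eq ?_
  rw [mul_mul_mul_comm A, mul_mul_mul_comm (A * B), mul_assoc, ← Real.exp_add, ← Real.exp_add,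
    ← Real.exp_add]
  ring_nf

theorem differentiableAt_gustafsonKernel {a b c s : ℂ} (ha : |s.re| < a.re) (hb : |s.re| < b.re)
    (hc : |s.re| < c.re) : DifferentiableAt ℂ (gustafsonKernel a b c) s :=
  (((differentiableAt_gammaPair (differentiableAt_const a) differentiableAt_id ha).mul
    (differentiableAt_gammaPair (differentiableAt_const b) differentiableAt_id hb)).mul
    (differentiableAt_gammaPair (differentiableAt_const c) differentiableAt_id hc)).mul
    (by fun_prop)

theorem tendsto_gustafsonKernel {a b c : ℂ} {r : ℝ} (ha : r < a.re) (hb : r < b.re)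
    (hc : r < c.re) : Tendsto (gustafsonKernel a b c) (stripEnds (-r) r) (𝓝 0) := by
  obtain ⟨C, -, hC⟩ := exists_norm_gustafsonKernel_le (β := a.re) ha hb hc
  have hrate : -(2 * Real.pi / 5) < 0 := neg_neg_of_pos (by positivity)
  refine squeeze_zero_norm' (eventually_stripEnds.2 ⟨0, fun s _ hs ↦
    hC a s ⟨le_rfl, le_rfl⟩ (abs_le.2 hs)⟩) ?_
  simpa using (Real.tendsto_exp_atBot.comp
    ((tendsto_abs_im_stripEnds _ _).const_mul_atTop_of_neg hrate)).const_mul C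

theorem integrable_gustafsonKernel {a b c : ℂ} {x : ℝ} (ha : |x| < a.re) (hb : |x| < b.re)
    (hc : |x| < c.re) : Integrable fun t : ℝ ↦ gustafsonKernel a b c (x + t * I) := by
  obtain ⟨C, -, hC⟩ := exists_norm_gustafsonKernel_le (β := a.re) ha hb hc
  have hcont : Continuous fun t : ℝ ↦ gustafsonKernel a b c (x + t * I) :=
    continuous_iff_continuousAt.2 fun t ↦ ContinuousAt.comp (f := fun t : ℝ ↦ (x + t * I : ℂ))
      (differentiableAt_gustafsonKernel (by simpa) (by simpa) (by simpa)).continuousAt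
      (by fun_prop)
  have hdecay := integrable_abs_pow_mul_exp_neg_mul_abs 0 (κ := 2 * Real.pi / 5) (by positivity)
  refine (hdecay.const_mul C).mono' hcont.aestronglyMeasurable (.of_forall fun t ↦ ?_)
  simpa using hC a (x + t * I) ⟨le_rfl, le_rfl⟩ (by simp)

theorem integral_gustafsonKernel_add_eq_sub {a b c : ℂ} {r : ℝ} (hr : 0 ≤ r) (ha : r < a.re)
    (hb : r < b.re) (hc : r < c.re) :
    ∫ t : ℝ, gustafsonKernel a b c (t * I + r) = ∫ t : ℝ, gustafsonKernel a b c (t * I - r) := by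
  have hline {x : ℝ} (hx : |x| = r) : Integrable fun t : ℝ ↦ gustafsonKernel a b c (x + t * I) :=
    integrable_gustafsonKernel (hx ▸ ha) (hx ▸ hb) (hx ▸ hc)
  have h := integral_vertical_eq_of_tendsto (neg_le_self hr)
    (fun s hs ↦ (differentiableAt_gustafsonKernel ((abs_le.2 hs).trans_lt ha)
      ((abs_le.2 hs).trans_lt hb) ((abs_le.2 hs).trans_lt hc)).differentiableWithinAt)
    (hline (by rw [abs_neg, abs_of_nonneg hr])) (hline (abs_of_nonneg hr))
    (tendsto_gustafsonKernel ha hb hc)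
  simpa only [add_comm _ (_ * I), ofReal_neg, ← sub_eq_add_neg] using h

/-- The integrand of the degenerate rank-one Gustafson integral in the variable `s = iz`. -/
noncomputable def gustafsonIntegrand (a b c s : ℂ) : ℂ :=
  gammaPair a s * gammaPair b s * gammaPair c s / (Complex.Gamma (2 * s) * Complex.Gamma (-(2 * s)))

theorem gustafsonIntegrand_eq (a b c s : ℂ) :
    gustafsonIntegrand a b c s = -(2 / Real.pi) * (s * gustafsonKernel a b c s) := by
  rw [gustafsonIntegrand, gustafsonKernel, div_eq_mul_inv, inv_Gamma_mul_Gamma_neg,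
    show (Real.pi * (2 * s) : ℂ) = 2 * Real.pi * s by ring]
  ring

theorem exists_norm_gustafsonIntegrand_le {α β : ℝ} {b c : ℂ} (hα : 0 < α) (hb : 0 < b.re)
    (hc : 0 < c.re) :
    ∃ bound : ℝ → ℝ, Integrable bound ∧ ∀ a : ℂ, a.re ∈ Icc α β → ∀ t : ℝ,
      ‖gustafsonIntegrand a b c (t * I)‖ ≤ bound t := by
  obtain ⟨C, -, hC⟩ := exists_norm_gustafsonKernel_le (β := β) hα hb hc
  have hdecay := integrable_abs_pow_mul_exp_neg_mul_abs 1 (κ := 2 * Real.pi / 5) (by positivity)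
  refine ⟨_, hdecay.const_mul (2 / Real.pi * C), fun a ha t ↦ ?_⟩
  have hker : ‖gustafsonKernel a b c (t * I)‖ ≤ C * Real.exp (-(2 * Real.pi / 5) * |t|) := by
    simpa using hC a (t * I) ha (by simp)
  calc ‖gustafsonIntegrand a b c (t * I)‖
      = 2 / Real.pi * (|t| * ‖gustafsonKernel a b c (t * I)‖) := by
        rw [gustafsonIntegrand_eq]
        simp [abs_of_pos Real.pi_pos]
    _ ≤ 2 / Real.pi * (|t| * (C * Real.exp (-(2 * Real.pi / 5) * |t|))) := by gcongr
    _ = 2 / Real.pi * C * (|t| ^ 1 * Real.exp (-(2 * Real.pi / 5) * |t|)) := by ring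

section

variable {a b c : ℂ}

theorem continuous_gustafsonIntegrand (ha : 0 < a.re) (hb : 0 < b.re) (hc : 0 < c.re) :
    Continuous fun t : ℝ ↦ gustafsonIntegrand a b c (t * I) := by
  simp_rw [gustafsonIntegrand_eq]
  refine continuous_const.mul (.mul (by fun_prop) (continuous_iff_continuousAt.2 fun t ↦ ?_))
  exact ContinuousAt.comp (f := fun t : ℝ ↦ (t * I : ℂ)) (differentiableAt_gustafsonKernel
    (by simpa) (by simpa) (by simpa)).continuousAt (by fun_prop)

theorem integrable_gustafsonIntegrand (ha : 0 < a.re) (hb : 0 < b.re) (hc : 0 < c.re) :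
    Integrable fun t : ℝ ↦ gustafsonIntegrand a b c (t * I) := by
  obtain ⟨bound, hbound, hle⟩ := exists_norm_gustafsonIntegrand_le (β := a.re) ha hb hc
  exact hbound.mono' (continuous_gustafsonIntegrand ha hb hc).aestronglyMeasurable
    (.of_forall (hle a ⟨le_rfl, le_rfl⟩))

theorem gustafsonKernel_add_half_sub_sub_half {s : ℂ} (ha : a + s ≠ 0) (ha' : a - s ≠ 0)
    (hb : b + s ≠ 0) (hb' : b - s ≠ 0) (hc : c + s ≠ 0) (hc' : c - s ≠ 0) :
    gustafsonKernel (a + 1 / 2) (b + 1 / 2) (c + 1 / 2) (s + 1 / 2) -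
        gustafsonKernel (a + 1 / 2) (b + 1 / 2) (c + 1 / 2) (s - 1 / 2) =
      Real.pi * ((a + b) * (a + c) * gustafsonIntegrand a b c s -
        gustafsonIntegrand (a + 1) b c s) := by
  have hsin : Complex.sin (2 * Real.pi * (s + 1 / 2)) = -Complex.sin (2 * Real.pi * s) := by
    rw [← Complex.sin_add_pi]
    ring_nf
  have hsin' : Complex.sin (2 * Real.pi * (s - 1 / 2)) = -Complex.sin (2 * Real.pi * s) := by
    rw [← Complex.sin_sub_pi]
    ring_nf
  have hpi : (Real.pi : ℂ) ≠ 0 := ofReal_ne_zero.2 Real.pi_ne_zero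
  simp only [gustafsonIntegrand_eq, gustafsonKernel, gammaPair_add_half_add_half ha,
    gammaPair_add_half_add_half hb, gammaPair_add_half_add_half hc,
    gammaPair_add_half_sub_half ha', gammaPair_add_half_sub_half hb',
    gammaPair_add_half_sub_half hc', gammaPair_add_one ha ha', hsin, hsin']
  field_simp
  ring

/-- The degenerate rank-one Gustafson integral, along the imaginary axis `s = it` with respect to
`dt`. -/
noncomputable def gustafsonIntegral (a b c : ℂ) : ℂ :=
  ∫ t : ℝ, gustafsonIntegrand a b c (t * I)

theorem gustafsonIntegral_add_one (ha : 0 < a.re) (hb : 0 < b.re) (hc : 0 < c.re) :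
    gustafsonIntegral (a + 1) b c = (a + b) * (a + c) * gustafsonIntegral a b c := by
  let K (s : ℂ) : ℂ := gustafsonKernel (a + 1 / 2) (b + 1 / 2) (c + 1 / 2) s
  have hre {x : ℂ} (hx : 0 < x.re) : 1 / 2 < (x + 1 / 2).re := by simpa using hx
  have hne {x : ℂ} (hx : 0 < x.re) (t : ℝ) : x + t * I ≠ 0 ∧ x - t * I ≠ 0 :=
    ⟨fun h ↦ by simpa [hx.ne'] using congrArg re h, fun h ↦ by simpa [hx.ne'] using congrArg re h⟩
  have hline {x : ℝ} (hx : |x| = 1 / 2) : Integrable fun t : ℝ ↦ K (t * I + x) := by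
    simp_rw [add_comm (_ * I)]
    exact integrable_gustafsonKernel (hx ▸ hre ha) (hx ▸ hre hb) (hx ▸ hre hc)
  have hplus : Integrable fun t : ℝ ↦ K (t * I + 1 / 2) := by
    simpa using hline (x := 1 / 2) (abs_of_pos one_half_pos)
  have hminus : Integrable fun t : ℝ ↦ K (t * I - 1 / 2) := by
    simpa [sub_eq_add_neg] using hline (x := -(1 / 2)) (by rw [abs_neg, abs_of_pos one_half_pos])
  have hshift : ∫ t : ℝ, K (t * I + 1 / 2) = ∫ t : ℝ, K (t * I - 1 / 2) := by
    simpa [K] using integral_gustafsonKernel_add_eq_sub one_half_pos.le (hre ha) (hre hb) (hre hc)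
  have hdiff : (0 : ℂ) = Real.pi * ((a + b) * (a + c) * gustafsonIntegral a b c -
      gustafsonIntegral (a + 1) b c) := calc
    (0 : ℂ) = ∫ t : ℝ, (K (t * I + 1 / 2) - K (t * I - 1 / 2)) := by
      rw [integral_sub hplus hminus, hshift, sub_self]
    _ = ∫ t : ℝ, Real.pi * ((a + b) * (a + c) * gustafsonIntegrand a b c (t * I) -
        gustafsonIntegrand (a + 1) b c (t * I)) :=
      integral_congr_ae (.of_forall fun t ↦ gustafsonKernel_add_half_sub_sub_half (hne ha t).1
        (hne ha t).2 (hne hb t).1 (hne hb t).2 (hne hc t).1 (hne hc t).2)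
    _ = Real.pi * ((a + b) * (a + c) * gustafsonIntegral a b c -
        gustafsonIntegral (a + 1) b c) := by
      rw [integral_const_mul, integral_sub ((integrable_gustafsonIntegrand ha hb hc).const_mul _)
        (integrable_gustafsonIntegrand (by simpa using by linarith) hb hc), integral_const_mul]
      rfl
  have hpi : (Real.pi : ℂ) ≠ 0 := ofReal_ne_zero.2 Real.pi_ne_zero
  exact (sub_eq_zero.1 ((mul_eq_zero_iff_left hpi).1 hdiff.symm)).symm

theorem gustafsonIntegral_swap_left (a b c : ℂ) :
    gustafsonIntegral a b c = gustafsonIntegral b a c := by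
  simp only [gustafsonIntegral, gustafsonIntegrand, mul_comm (gammaPair a _)]

theorem gustafsonIntegral_swap_right (a b c : ℂ) :
    gustafsonIntegral a b c = gustafsonIntegral a c b := by
  simp only [gustafsonIntegral, gustafsonIntegrand, mul_right_comm]

theorem differentiableOn_gustafsonIntegral (hb : 0 < b.re) (hc : 0 < c.re) :
    DifferentiableOn ℂ (fun a ↦ gustafsonIntegral a b c) {a | 0 < a.re} := by
  intro a ha
  have ha' : 0 < a.re / 2 := half_pos ha
  obtain ⟨bound, hbound, hle⟩ := exists_norm_gustafsonIntegrand_le (β := a.re + 1) ha' hb hc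
  have hU : IsOpen (re ⁻¹' Ioo (a.re / 2) (a.re + 1)) := isOpen_Ioo.preimage continuous_re
  have haU : a ∈ re ⁻¹' Ioo (a.re / 2) (a.re + 1) :=
    ⟨half_lt_self ha, lt_add_one _⟩
  refine ((differentiableOn_integral_of_dominated hU (fun x hx ↦
    (continuous_gustafsonIntegrand (ha'.trans hx.1) hb hc).aestronglyMeasurable)
    (.of_forall fun t x hx ↦ ?_) (.of_forall fun t x hx ↦ hle x (Ioo_subset_Icc_self hx) t)
    hbound).differentiableAt (hU.mem_nhds haU)).differentiableWithinAt
  exact ((((differentiableAt_gammaPair differentiableAt_id (differentiableAt_const (t * I : ℂ))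
    (by simpa using ha'.trans hx.1)).mul_const _).mul_const _).div_const _).differentiableWithinAt

theorem isBigO_gustafsonIntegral_one {α β : ℝ} (hα : 0 < α) (hb : 0 < b.re) (hc : 0 < c.re) :
    (fun a ↦ gustafsonIntegral a b c) =O[stripEnds α β] fun _ ↦ (1 : ℝ) := by
  obtain ⟨bound, hbound, hle⟩ := exists_norm_gustafsonIntegrand_le (β := β) hα hb hc
  refine .of_bound (∫ t, bound t) (eventually_stripEnds.2 ⟨0, fun a _ ha ↦ ?_⟩)
  simpa [gustafsonIntegral] using norm_integral_le_of_norm_le hbound (.of_forall (hle a ha))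

theorem gustafsonIntegral_half : gustafsonIntegral (1 / 2) (1 / 2) (1 / 2) = 4 * Real.pi := by
  have hintegrand (t : ℝ) : gustafsonIntegrand (1 / 2) (1 / 2) (1 / 2) (t * I) =
      ((4 * Real.pi * (Real.pi * t * Real.sinh (Real.pi * t) / Real.cosh (Real.pi * t) ^ 2) : ℝ) :
        ℂ) := by
    have hcosh : Complex.cosh (Real.pi * t) ≠ 0 := by
      rw [← ofReal_mul, ← ofReal_cosh]
      exact ofReal_ne_zero.2 (Real.cosh_pos _).ne'
    have hpi : (Real.pi : ℂ) ≠ 0 := ofReal_ne_zero.2 Real.pi_ne_zero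
    rw [gustafsonIntegrand_eq, gustafsonKernel, gammaPair_half, ← mul_assoc (Real.pi : ℂ),
      ← mul_assoc (2 * Real.pi : ℂ), Complex.sin_mul_I, Complex.cos_mul_I,
      mul_assoc 2 (Real.pi : ℂ), Complex.sinh_two_mul]
    push_cast
    field_simp
    linear_combination (-4 * t * Complex.sinh (Real.pi * t)) * I_sq
  simp_rw [gustafsonIntegral, hintegrand]
  rw [integral_complex_ofReal, integral_const_mul, Measure.integral_comp_mul_left
    (fun x ↦ x * Real.sinh x / Real.cosh x ^ 2), integral_mul_sinh_div_cosh_sq]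
  simp [abs_of_pos Real.pi_pos]

/-- The Gustafson integral divided by the product of gamma functions in its closed form. -/
noncomputable def normalizedGustafsonIntegral (a b c : ℂ) : ℂ :=
  gustafsonIntegral a b c /
    (Complex.Gamma (a + b) * Complex.Gamma (a + c) * Complex.Gamma (b + c))

theorem normalizedGustafsonIntegral_swap_left (a b c : ℂ) :
    normalizedGustafsonIntegral a b c = normalizedGustafsonIntegral b a c := by
  rw [normalizedGustafsonIntegral, normalizedGustafsonIntegral, gustafsonIntegral_swap_left,
    add_comm a b, mul_right_comm]

theorem normalizedGustafsonIntegral_swap_right (a b c : ℂ) :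
    normalizedGustafsonIntegral a b c = normalizedGustafsonIntegral a c b := by
  rw [normalizedGustafsonIntegral, normalizedGustafsonIntegral, gustafsonIntegral_swap_right,
    add_comm b c, mul_comm (Complex.Gamma _) (Complex.Gamma (a + c))]

theorem normalizedGustafsonIntegral_add_one (ha : 0 < a.re) (hb : 0 < b.re) (hc : 0 < c.re) :
    normalizedGustafsonIntegral (a + 1) b c = normalizedGustafsonIntegral a b c := by
  have hne {x : ℂ} (hx : 0 < x.re) : a + x ≠ 0 := fun h ↦ by
    have := congrArg re h
    simp only [add_re, zero_re] at this
    linarith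
  rw [normalizedGustafsonIntegral, normalizedGustafsonIntegral, gustafsonIntegral_add_one ha hb hc,
    add_right_comm a 1 b, add_right_comm a 1 c, Complex.Gamma_add_one _ (hne hb),
    Complex.Gamma_add_one _ (hne hc), mul_mul_mul_comm, mul_assoc (_ * _),
    mul_div_mul_left _ _ (mul_ne_zero (hne hb) (hne hc))]

theorem differentiableOn_normalizedGustafsonIntegral (hb : 0 < b.re) (hc : 0 < c.re) :
    DifferentiableOn ℂ (fun a ↦ normalizedGustafsonIntegral a b c) {a | 0 < a.re} := by
  have hΓ (w : ℂ) : Differentiable ℂ fun a ↦ (Complex.Gamma (a + w))⁻¹ :=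
    differentiable_one_div_Gamma.comp (differentiable_id.add_const w)
  simp_rw [normalizedGustafsonIntegral, div_eq_mul_inv, mul_inv]
  exact (differentiableOn_gustafsonIntegral hb hc).mul
    (((hΓ b).mul (hΓ c)).mul_const _).differentiableOn

theorem isLittleO_normalizedGustafsonIntegral {α β : ℝ} (hα : 0 < α) (hb : 0 < b.re)
    (hc : 0 < c.re) :
    (fun a ↦ normalizedGustafsonIntegral a b c) =o[stripEnds α β]
      fun a ↦ Real.exp (2 * Real.pi * |a.im|) := by
  have hκ : |2 * Real.pi / 5| < Real.pi / 2 := by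
    rw [abs_of_pos (by positivity)]
    linarith [Real.pi_pos]
  have hbigO : (fun a ↦ normalizedGustafsonIntegral a b c) =O[stripEnds α β]
      fun a ↦ Real.exp (6 * Real.pi / 5 * |a.im|) := by
    refine (((isBigO_gustafsonIntegral_one hα hb hc).mul
      ((isBigO_inv_Gamma_add_stripEnds α β hκ b).mul
        (isBigO_inv_Gamma_add_stripEnds α β hκ c))).const_mul_left
      (Complex.Gamma (b + c))⁻¹).congr (fun a ↦ ?_) fun a ↦ ?_
    · rw [normalizedGustafsonIntegral, div_eq_mul_inv, mul_inv, mul_inv]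
      ring
    · rw [one_mul, ← Real.exp_add]
      ring_nf
  refine hbigO.trans_isLittleO (Real.isLittleO_exp_comp_exp_comp.2 ?_)
  have hrate : 0 < 4 * Real.pi / 5 := by positivity
  refine ((tendsto_abs_im_stripEnds α β).const_mul_atTop hrate).congr fun s ↦ ?_
  ring

theorem normalizedGustafsonIntegral_eq_of_re_pos {a' : ℂ} (ha : 0 < a.re) (ha' : 0 < a'.re)
    (hb : 0 < b.re) (hc : 0 < c.re) :
    normalizedGustafsonIntegral a b c = normalizedGustafsonIntegral a' b c := by
  refine apply_eq_apply_of_periodic_of_isLittleO_stripEnds (a := 1) one_pos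
    (f := fun a ↦ normalizedGustafsonIntegral a b c)
    (differentiableOn_normalizedGustafsonIntegral hb hc)
    (fun s hs ↦ by simpa using normalizedGustafsonIntegral_add_one hs hb hc) one_pos ?_ ha ha'
  simpa using isLittleO_normalizedGustafsonIntegral one_pos hb hc

theorem normalizedGustafsonIntegral_eq (ha : 0 < a.re) (hb : 0 < b.re) (hc : 0 < c.re) :
    normalizedGustafsonIntegral a b c = 4 * Real.pi := by
  have hhalf : 0 < (1 / 2 : ℂ).re := by norm_num
  have hone : (1 / 2 + 1 / 2 : ℂ) = 1 := by norm_num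
  calc normalizedGustafsonIntegral a b c
      = normalizedGustafsonIntegral b (1 / 2) c := by
        rw [normalizedGustafsonIntegral_eq_of_re_pos ha hhalf hb hc,
          normalizedGustafsonIntegral_swap_left]
    _ = normalizedGustafsonIntegral c (1 / 2) (1 / 2) := by
        rw [normalizedGustafsonIntegral_eq_of_re_pos hb hhalf hhalf hc,
          normalizedGustafsonIntegral_swap_right, normalizedGustafsonIntegral_swap_left]
    _ = 4 * Real.pi := by
        rw [normalizedGustafsonIntegral_eq_of_re_pos hc hhalf hhalf hhalf,
          normalizedGustafsonIntegral, gustafsonIntegral_half, hone]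
        simp

theorem gustafsonIntegral_eq (ha : 0 < a.re) (hb : 0 < b.re) (hc : 0 < c.re) :
    gustafsonIntegral a b c = 4 * Real.pi *
      (Complex.Gamma (a + b) * Complex.Gamma (a + c) * Complex.Gamma (b + c)) := by
  have hΓ {x y : ℂ} (hx : 0 < x.re) (hy : 0 < y.re) : Complex.Gamma (x + y) ≠ 0 :=
    Complex.Gamma_ne_zero_of_re_pos (add_pos hx hy)
  exact (div_eq_iff (mul_ne_zero (mul_ne_zero (hΓ ha hb) (hΓ ha hc)) (hΓ hb hc))).1
    (normalizedGustafsonIntegral_eq ha hb hc)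

end

end Gustafson

/-- The degenerate rank-one (`n = 1`) `B_n` Gustafson integral:
`(1/2π)∫_ℝ ∏_{j=1}^{3} Γ(aⱼ+iz)Γ(aⱼ-iz) / (Γ(2iz)Γ(-2iz)) dz
 = 2 Γ(a₁+a₂)Γ(a₁+a₃)Γ(a₂+a₃)` for `Re(aⱼ) > 0`. -/
theorem degenerate_gustafson_rank_one (a₁ a₂ a₃ : ℂ)
    (h1 : 0 < a₁.re) (h2 : 0 < a₂.re) (h3 : 0 < a₃.re) :
    ((1 / (2 * Real.pi) : ℝ) : ℂ) *
      ∫ z : ℝ,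
        (Complex.Gamma (a₁ + Complex.I * z) * Complex.Gamma (a₁ - Complex.I * z) *
          Complex.Gamma (a₂ + Complex.I * z) * Complex.Gamma (a₂ - Complex.I * z) *
          Complex.Gamma (a₃ + Complex.I * z) * Complex.Gamma (a₃ - Complex.I * z)) /
        (Complex.Gamma (2 * Complex.I * z) * Complex.Gamma (-2 * Complex.I * z)) =
      2 * Complex.Gamma (a₁ + a₂) * Complex.Gamma (a₁ + a₃) * Complex.Gamma (a₂ + a₃) := by
  have hpi : (Real.pi : ℂ) ≠ 0 := Complex.ofReal_ne_zero.2 Real.pi_ne_zero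
  calc
    _ = ((1 / (2 * Real.pi) : ℝ) : ℂ) * Gustafson.gustafsonIntegral a₁ a₂ a₃ := by
      simp only [Gustafson.gustafsonIntegral, Gustafson.gustafsonIntegrand, Gustafson.gammaPair,
        mul_comm (Complex.ofReal _) Complex.I, ← mul_assoc, ← neg_mul]
    _ = 2 * Complex.Gamma (a₁ + a₂) * Complex.Gamma (a₁ + a₃) * Complex.Gamma (a₂ + a₃) := by
      rw [Gustafson.gustafsonIntegral_eq h1 h2 h3]
      push_cast
      field_simp
      ring
end
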